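/- arXiv:2510.17112 — 9 statements merged into one kernel-verified Lean document; each statement's English description precedes it below -/
import Mathlib

section
/- For every positive integer m, the Minkowski dimension of C_m equals 1/2; equivalently, lim_{δ→0⁺} log λ(V_δ(C_m)) / log δ = 1 − 1/2 = 1/2. -/
open MeasureTheory Filter Set

/-- The closed `δ`-neighbourhood `V_δ(Ω) = {x : ∃ y ∈ Ω, |x - y| ≤ δ}`. -/
def closedNbhd (Ω : Set ℝ) (δ : ℝ) : Set ℝ := {x : ℝ | ∃ y ∈ Ω, |x - y| ≤ δ}

/-- The value `g(a₁ ⋯ a_k) = 1/(a₁ + 1/(a₂ + ⋯ + 1/a_k))` of a finite continued fraction. -/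
noncomputable def cfVal : List ℕ → ℝ
  | [] => 0
  | a :: t => 1 / ((a : ℝ) + cfVal t)

/-- A word of positive integers whose last letter (if any) is at least `2`. -/
def isCFWord (a : List ℕ) : Prop := (∀ x ∈ a, 1 ≤ x) ∧ ∀ ℓ ∈ a.getLast?, 2 ≤ ℓ

/-- `C_m`: the set of rationals in `(0,1)` whose continued fraction expansion
has length `m`, i.e. the set of values of continued fractions of length `m`
with last partial quotient at least `2`. -/
def Cset (m : ℕ) : Set ℝ :=
  {x : ℝ | ∃ a : List ℕ, a.length = m ∧ isCFWord a ∧ x = cfVal a}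


lemma cfVal_nonneg (t : List ℕ) : 0 ≤ cfVal t := by
  induction t with
  | nil => simp [cfVal]
  | cons a t ih => simp only [cfVal]; positivity

lemma inv_diff (a y z : ℝ) (ha : 1 ≤ a) (hy : 0 ≤ y) (hz : 0 ≤ z) :
    |1 / (a + y) - 1 / (a + z)| ≤ |y - z| / a ^ 2 := by
  have h1 : 0 < a + y := by linarith
  have h2 : 0 < a + z := by linarith
  have : 1 / (a + y) - 1 / (a + z) = (z - y) / ((a + y) * (a + z)) := by
    field_simp; ring
  rw [this, abs_div, abs_sub_comm z y, abs_of_pos (mul_pos h1 h2)]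
  apply div_le_div_of_nonneg_left (abs_nonneg _) (by positivity)
  nlinarith [mul_nonneg hy hz]

lemma cover (ε : ℝ) (hε : 0 < ε) (m : ℕ) : ∃ K : ℝ, 0 < K ∧ ∀ δ : ℝ, 0 < δ → δ ≤ 1 →
    ∃ F : Finset ℝ, (∀ f ∈ F, 0 ≤ f) ∧ (F.card : ℝ) ≤ K * δ ^ (-(1 / 2 + ε)) ∧
      ∀ a : List ℕ, a.length = m → (∀ x ∈ a, 1 ≤ x) → ∃ f ∈ F, |cfVal a - f| ≤ δ := by
  classical
  induction m with
  | zero =>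
    refine ⟨1, one_pos, fun δ h0 h1 => ⟨{0}, by simp, ?_, ?_⟩⟩
    · simp only [Finset.card_singleton, Nat.cast_one, one_mul]
      exact Real.one_le_rpow_of_pos_of_le_one_of_nonpos h0 h1 (by linarith)
    · intro a ha _
      rw [List.length_eq_zero_iff] at ha
      subst ha
      exact ⟨0, by simp, by simp [cfVal, h0.le]⟩
  | succ m ih =>
    obtain ⟨K, hK, H⟩ := ih
    have hs : Summable (fun n : ℕ => (n : ℝ) ^ (-(1 + 2 * ε))) :=
      Real.summable_nat_rpow.2 (by linarith)
    have hS0 : 0 ≤ ∑' n : ℕ, (n : ℝ) ^ (-(1 + 2 * ε)) :=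
      tsum_nonneg fun n => by positivity
    set S := ∑' n : ℕ, (n : ℝ) ^ (-(1 + 2 * ε)) with hS
    refine ⟨K * S + 2, by positivity, fun δ h0 h1 => ?_⟩
    set q : ℝ := δ ^ (-(1 / 2) : ℝ) with hq
    have hq1 : 1 ≤ q := Real.one_le_rpow_of_pos_of_le_one_of_nonpos h0 h1 (by norm_num)
    have hq2 : q * q * δ = 1 := by
      rw [hq, ← Real.rpow_add h0]
      norm_num
      rw [Real.rpow_neg_one]; field_simp
    have hqq : q ≤ δ ^ (-(1 / 2 + ε)) :=
      Real.rpow_le_rpow_of_exponent_ge h0 h1 (by linarith)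
    set A := ⌊q⌋₊ with hA
    have hAq : (A : ℝ) ≤ q := Nat.floor_le (by linarith)
    have hAq' : q < A + 1 := Nat.lt_floor_add_one q
    have hsmall : ∀ a ∈ Finset.Icc 1 A, 0 < (a : ℝ) ^ 2 * δ ∧ (a : ℝ) ^ 2 * δ ≤ 1 := by
      intro a ha
      rw [Finset.mem_Icc] at ha
      have h1a : (1 : ℝ) ≤ a := by exact_mod_cast ha.1
      have h2a : (a : ℝ) ≤ q := le_trans (by exact_mod_cast ha.2) hAq
      refine ⟨by positivity, ?_⟩
      rw [← hq2]
      nlinarith [mul_le_mul h2a h2a (by linarith) (by linarith)]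
    have H' : ∀ a : ℕ, ∃ F : Finset ℝ, a ∈ Finset.Icc 1 A → (∀ f ∈ F, 0 ≤ f) ∧
        (F.card : ℝ) ≤ K * ((a : ℝ) ^ 2 * δ) ^ (-(1 / 2 + ε)) ∧
        ∀ t : List ℕ, t.length = m → (∀ x ∈ t, 1 ≤ x) →
          ∃ f ∈ F, |cfVal t - f| ≤ (a : ℝ) ^ 2 * δ := by
      intro a
      by_cases ha : a ∈ Finset.Icc 1 A
      · obtain ⟨F, hF⟩ := H _ (hsmall a ha).1 (hsmall a ha).2
        exact ⟨F, fun _ => hF⟩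
      · exact ⟨∅, fun h => absurd h ha⟩
    choose F hF using H'
    refine ⟨((Finset.Icc 1 A).biUnion fun a => (F a).image fun f => 1 / ((a : ℝ) + f)) ∪
      (Finset.range (A + 1)).image (fun k : ℕ => (k : ℝ) * δ), ?_, ?_, ?_⟩
    · intro f hf
      simp only [Finset.mem_union, Finset.mem_biUnion, Finset.mem_image] at hf
      rcases hf with ⟨a, ha, g, hg, rfl⟩ | ⟨k, _, rfl⟩
      · have := (hF a ha).1 g hg
        positivity
      · positivity
    · have hc1 : (((Finset.Icc 1 A).biUnion fun a =>
          (F a).image fun f => 1 / ((a : ℝ) + f)).card : ℝ) ≤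
          K * S * δ ^ (-(1 / 2 + ε)) := by
        calc (((Finset.Icc 1 A).biUnion fun a =>
          (F a).image fun f => 1 / ((a : ℝ) + f)).card : ℝ)
            ≤ ((∑ a ∈ Finset.Icc 1 A, (F a).card : ℕ) : ℝ) := by
              exact_mod_cast Finset.card_biUnion_le.trans
                (Finset.sum_le_sum fun a _ => Finset.card_image_le)
          _ = ∑ a ∈ Finset.Icc 1 A, ((F a).card : ℝ) := by push_cast; rfl
          _ ≤ ∑ a ∈ Finset.Icc 1 A, (K * δ ^ (-(1 / 2 + ε))) * (a : ℝ) ^ (-(1 + 2 * ε)) := by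
              apply Finset.sum_le_sum
              intro a ha
              refine (hF a ha).2.1.trans (le_of_eq ?_)
              rw [Real.mul_rpow (by positivity) h0.le, ← Real.rpow_natCast (a : ℝ) 2,
                ← Real.rpow_mul (by positivity)]
              have : ((2 : ℕ) : ℝ) * (-(1 / 2 + ε)) = -(1 + 2 * ε) := by push_cast; ring
              rw [this]; ring
          _ = (K * δ ^ (-(1 / 2 + ε))) * ∑ a ∈ Finset.Icc 1 A, (a : ℝ) ^ (-(1 + 2 * ε)) := by
              rw [Finset.mul_sum]
          _ ≤ (K * δ ^ (-(1 / 2 + ε))) * S := by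
              apply mul_le_mul_of_nonneg_left _ (by positivity)
              exact hs.sum_le_tsum _ (fun n _ => by positivity)
          _ = _ := by ring
      have hc2 : (((Finset.range (A + 1)).image (fun k : ℕ => (k : ℝ) * δ)).card : ℝ) ≤
          2 * δ ^ (-(1 / 2 + ε)) := by
        have : (((Finset.range (A + 1)).image (fun k : ℕ => (k : ℝ) * δ)).card : ℝ) ≤ A + 1 := by
          have := Finset.card_image_le (s := Finset.range (A + 1)) (f := fun k : ℕ => (k : ℝ) * δ)
          rw [Finset.card_range] at this
          exact_mod_cast this
        linarith
      have hu : ((((Finset.Icc 1 A).biUnion fun a => (F a).image fun f => 1 / ((a : ℝ) + f)) ∪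
        (Finset.range (A + 1)).image (fun k : ℕ => (k : ℝ) * δ)).card : ℝ) ≤
        (((Finset.Icc 1 A).biUnion fun a => (F a).image fun f => 1 / ((a : ℝ) + f)).card : ℝ) +
        (((Finset.range (A + 1)).image (fun k : ℕ => (k : ℝ) * δ)).card : ℝ) := by
          exact_mod_cast Finset.card_union_le _ _
      rw [add_mul]
      linarith
    · intro l hl hpos
      match l, hl, hpos with
      | a :: t, hl, hpos =>
        have h1a : 1 ≤ a := hpos a (by simp)
        have h1a' : (1 : ℝ) ≤ a := by exact_mod_cast h1a
        have ht := cfVal_nonneg t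
        simp only [cfVal]
        by_cases haA : a ≤ A
        · have hmem : a ∈ Finset.Icc 1 A := Finset.mem_Icc.2 ⟨h1a, haA⟩
          obtain ⟨h0F, _, h2⟩ := hF a hmem
          obtain ⟨f, hf, hd⟩ := h2 t (by simpa using hl)
            (fun x hx => hpos x (List.mem_cons_of_mem _ hx))
          refine ⟨1 / ((a : ℝ) + f), ?_, ?_⟩
          · apply Finset.mem_union_left
            exact Finset.mem_biUnion.2 ⟨a, hmem, Finset.mem_image.2 ⟨f, hf, rfl⟩⟩
          · refine (inv_diff a _ f h1a' ht (h0F f hf)).trans ?_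
            rw [div_le_iff₀ (by positivity)]
            linarith
        · have haA' : (A : ℝ) + 1 ≤ a := by exact_mod_cast Nat.lt_of_not_le haA
          set x := 1 / ((a : ℝ) + cfVal t) with hx
          have hx0 : 0 ≤ x := by positivity
          have hxq : x ≤ q * δ := by
            rw [hx, div_le_iff₀ (by positivity)]
            have : 0 < q * δ := by positivity
            nlinarith
          have hxd : x / δ ≤ q := by rw [div_le_iff₀ h0]; exact hxq
          refine ⟨(⌊x / δ⌋₊ : ℝ) * δ, ?_, ?_⟩
          · apply Finset.mem_union_right
            refine Finset.mem_image.2 ⟨⌊x / δ⌋₊, ?_, rfl⟩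
            rw [Finset.mem_range]
            exact Nat.lt_succ_of_le (Nat.floor_le_floor hxd)
          · have e1 : (⌊x / δ⌋₊ : ℝ) ≤ x / δ := Nat.floor_le (by positivity)
            have e2 : x / δ < ⌊x / δ⌋₊ + 1 := Nat.lt_floor_add_one _
            rw [le_div_iff₀ h0] at e1
            rw [div_lt_iff₀ h0] at e2
            rw [abs_le]
            constructor <;> linarith

lemma vol_upper (ε : ℝ) (hε : 0 < ε) (m : ℕ) : ∃ K : ℝ, 0 < K ∧ ∀ δ : ℝ, 0 < δ → δ ≤ 1 →
    volume (closedNbhd (Cset m) δ) ≤ ENNReal.ofReal (K * δ ^ (1 / 2 - ε)) := by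
  obtain ⟨K, hK, H⟩ := cover ε hε m
  refine ⟨4 * K, by positivity, fun δ h0 h1 => ?_⟩
  obtain ⟨F, -, hc, hF⟩ := H δ h0 h1
  have hsub : closedNbhd (Cset m) δ ⊆ ⋃ f ∈ F, Icc (f - 2 * δ) (f + 2 * δ) := by
    rintro x ⟨y, ⟨a, ha, hw, rfl⟩, hxy⟩
    obtain ⟨f, hf, hd⟩ := hF a ha hw.1
    simp only [mem_iUnion]
    refine ⟨f, hf, ?_⟩
    rw [abs_le] at hd hxy
    constructor <;> linarith
  calc volume (closedNbhd (Cset m) δ) ≤ volume (⋃ f ∈ F, Icc (f - 2 * δ) (f + 2 * δ)) :=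
        measure_mono hsub
    _ ≤ ∑ f ∈ F, volume (Icc (f - 2 * δ) (f + 2 * δ)) := measure_biUnion_finset_le _ _
    _ = ∑ f ∈ F, ENNReal.ofReal (4 * δ) := by
        apply Finset.sum_congr rfl
        intro f _
        rw [Real.volume_Icc]; congr 1; ring
    _ = ENNReal.ofReal (F.card * (4 * δ)) := by
        rw [Finset.sum_const, nsmul_eq_mul, ENNReal.ofReal_mul (p := (F.card : ℝ)) (by positivity),
          ENNReal.ofReal_natCast]
    _ ≤ _ := by
        apply ENNReal.ofReal_le_ofReal
        have : δ ^ (1 / 2 - ε) = δ ^ (-(1 / 2 + ε)) * δ := by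
          rw [← Real.rpow_add_one h0.ne']; congr 1; ring
        rw [this]
        nlinarith [mul_le_mul_of_nonneg_right hc h0.le]

lemma isCFWord_cons (t : List ℕ) (ht : isCFWord t) (hne : t ≠ []) : isCFWord (1 :: t) := by
  refine ⟨?_, ?_⟩
  · intro x hx
    rcases List.mem_cons.1 hx with rfl | h
    · exact le_rfl
    · exact ht.1 x h
  · intro l hl
    apply ht.2
    rw [List.getLast?_cons] at hl
    cases h : t.getLast? with
    | none => exact absurd (List.getLast?_eq_none_iff.1 h) hne
    | some v => rw [h] at hl; simpa using hl

lemma lower_interval (m : ℕ) : ∃ c : ℝ, 0 < c ∧ ∀ δ : ℝ, 0 < δ → δ ≤ 1 / 4 →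
    ∃ u v : ℝ, 0 ≤ u ∧ u ≤ v ∧ v ≤ 1 ∧ c * δ ^ (1 / 2 : ℝ) ≤ v - u ∧
      Ioo u v ⊆ closedNbhd (Cset (m + 1)) δ := by
  induction m with
  | zero =>
    refine ⟨1 / 2, by norm_num, fun δ h0 h1 => ?_⟩
    set r : ℝ := δ ^ (1 / 2 : ℝ) with hr
    have hr0 : 0 < r := by positivity
    have hrr : r * r = δ := by
      rw [hr, ← Real.rpow_add h0]; norm_num
    have hr2 : r ≤ 1 / 2 := by nlinarith
    refine ⟨0, r, le_rfl, hr0.le, by linarith, by linarith, ?_⟩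
    rintro x ⟨hx0, hxr⟩
    have h1x : 2 ≤ 1 / x := by rw [le_div_iff₀ hx0]; linarith
    set a := ⌊1 / x⌋₊ with ha
    have ha2 : 2 ≤ a := Nat.le_floor (by exact_mod_cast h1x)
    have ha2' : (2 : ℝ) ≤ a := by exact_mod_cast ha2
    have e1 : (a : ℝ) ≤ 1 / x := Nat.floor_le (by linarith)
    have e2 : 1 / x < a + 1 := Nat.lt_floor_add_one _
    rw [le_div_iff₀ hx0] at e1
    rw [div_lt_iff₀ hx0] at e2
    -- use `a + 1`, so that `1/(a+1) < x`
    refine ⟨cfVal [a + 1], ⟨[a + 1], rfl, ⟨by simp, by simp; omega⟩, rfl⟩, ?_⟩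
    simp only [cfVal]
    push_cast
    have hb : 1 / ((a : ℝ) + 1 + 0) < x := by
      rw [add_zero, div_lt_iff₀ (by positivity)]; linarith
    rw [abs_of_pos (by linarith), sub_le_iff_le_add]
    have : x - x * x ≤ 1 / ((a : ℝ) + 1 + 0) := by
      rw [add_zero, le_div_iff₀ (by positivity)]
      nlinarith
    nlinarith
  | succ m ih =>
    obtain ⟨c, hc, H⟩ := ih
    refine ⟨c / 4, by positivity, fun δ h0 h1 => ?_⟩
    obtain ⟨u, v, hu, huv, hv, hl, hsub⟩ := H δ h0 h1
    have hu1 : 0 < 1 + u := by linarith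
    have hv1 : 0 < 1 + v := by linarith
    refine ⟨1 / (1 + v), 1 / (1 + u), by positivity,
      one_div_le_one_div_of_le hu1 (by linarith), ?_, ?_, ?_⟩
    · rw [div_le_one hu1]; linarith
    · have : 1 / (1 + u) - 1 / (1 + v) = (v - u) / ((1 + u) * (1 + v)) := by
        field_simp; ring
      rw [this, le_div_iff₀ (by positivity)]
      have hp : (1 + u) * (1 + v) ≤ 4 := by nlinarith
      have : 0 ≤ c / 4 * δ ^ (1 / 2 : ℝ) := by positivity
      nlinarith
    · rintro x ⟨hx1, hx2⟩
      have hx0 : 0 < x := lt_trans (by positivity) hx1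
      rw [div_lt_iff₀ hv1] at hx1
      rw [lt_div_iff₀ hu1] at hx2
      have hy : 1 / x - 1 ∈ Ioo u v := by
        constructor
        · rw [lt_sub_iff_add_lt, lt_div_iff₀ hx0]; linarith
        · rw [sub_lt_iff_lt_add, div_lt_iff₀ hx0]; linarith
      obtain ⟨z, ⟨t, ht, hw, rfl⟩, hz⟩ := hsub hy
      refine ⟨cfVal (1 :: t), ⟨1 :: t, by simp [ht], isCFWord_cons t hw ?_, rfl⟩, ?_⟩
      · rintro rfl; simp at ht
      · have := inv_diff 1 (1 / x - 1) (cfVal t) le_rfl (hu.trans hy.1.le) (cfVal_nonneg t)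
        simp only [cfVal, Nat.cast_one]
        have e : 1 / (1 + (1 / x - 1)) = x := by simp
        rw [e] at this
        refine this.trans ?_
        simpa using hz

theorem minkowski_dim_Cm (m : ℕ) (hm : 0 < m) :
    Tendsto (fun δ : ℝ => Real.log (volume (closedNbhd (Cset m) δ)).toReal / Real.log δ)
      (nhdsWithin (0 : ℝ) (Set.Ioi 0)) (nhds (1 / 2 : ℝ)) := by
  obtain ⟨n, rfl⟩ : ∃ n, m = n + 1 := ⟨m - 1, by omega⟩
  have hlog : ∀ C : ℝ, Tendsto (fun δ : ℝ => C / Real.log δ) (nhdsWithin (0 : ℝ) (Ioi 0))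
      (nhds 0) := fun C => Real.tendsto_log_nhdsGT_zero.const_div_atBot C
  rw [Metric.tendsto_nhds]
  intro η hη
  obtain ⟨K, hK, HK⟩ := vol_upper (η / 2) (by positivity) (n + 1)
  obtain ⟨c, hc, Hc⟩ := lower_interval n
  have t1 := (Metric.tendsto_nhds.1 (hlog (Real.log K))) (η / 2) (by positivity)
  have t2 := (Metric.tendsto_nhds.1 (hlog (Real.log c))) (η / 2) (by positivity)
  have t3 : ∀ᶠ δ : ℝ in nhdsWithin (0 : ℝ) (Ioi 0), δ ∈ Ioo (0 : ℝ) (1 / 4) :=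
    Ioo_mem_nhdsGT (by norm_num)
  filter_upwards [t1, t2, t3] with δ h1 h2 h3
  obtain ⟨h0, h4⟩ := h3
  have hV := HK δ h0 (by linarith)
  obtain ⟨u, v, hu, huv, hv, hl, hsub⟩ := Hc δ h0 h4.le
  set V := volume (closedNbhd (Cset (n + 1)) δ) with hVdef
  have hVK : V.toReal ≤ K * δ ^ (1 / 2 - η / 2) :=
    ENNReal.toReal_le_of_le_ofReal (by positivity) hV
  have hVc : c * δ ^ (1 / 2 : ℝ) ≤ V.toReal := by
    refine hl.trans ?_
    have : ENNReal.ofReal (v - u) ≤ V := by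
      rw [← Real.volume_Ioo]; exact measure_mono hsub
    exact (ENNReal.ofReal_le_iff_le_toReal (ne_top_of_le_ne_top ENNReal.ofReal_ne_top hV)).1 this
  have hcp : 0 < c * δ ^ (1 / 2 : ℝ) := by positivity
  have hVp : 0 < V.toReal := lt_of_lt_of_le hcp hVc
  have l1 := Real.log_le_log hcp hVc
  have l2 := Real.log_le_log hVp hVK
  rw [Real.log_mul hc.ne' (by positivity), Real.log_rpow h0] at l1
  rw [Real.log_mul hK.ne' (by positivity), Real.log_rpow h0] at l2
  have hL : Real.log δ < 0 := Real.log_neg h0 (by linarith)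
  rw [Real.dist_eq, sub_zero, abs_lt] at h1 h2
  rw [lt_div_iff_of_neg hL, div_lt_iff_of_neg hL] at h1 h2
  rw [Real.dist_eq, abs_lt, lt_sub_iff_add_lt, sub_lt_iff_lt_add, lt_div_iff_of_neg hL,
    div_lt_iff_of_neg hL]
  constructor <;> nlinarith
end

section
/- For every positive integer m, the Minkowski dimension of E_m equals 1 − 1/2^m; equivalently, lim_{δ→0⁺} log λ(V_δ(E_m)) / log δ = 1/2^m. -/
open MeasureTheory Filter Set

/-- `E_m`: the set of rationals `x ∈ (0,1]` whose greedy Egyptian fraction expansion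
has length `m`: there are integers `1 ≤ a 0 < a 1 < ⋯ < a (m-1)` with `x = Σ_{i<m} 1/a i`,
and for every `ℓ < m` one has `Σ_{i ≤ ℓ} 1/a i ≤ x` and
`x - Σ_{i<ℓ} 1/a i < 1/(a ℓ - 1)` (the latter stated in the multiplied-out form
`(a ℓ - 1) * (x - Σ_{i<ℓ} 1/a i) < 1`, which is the correct reading also when `a ℓ = 1`,
where `1/(a ℓ - 1) = ∞`). -/
def Eset (m : ℕ) : Set ℝ :=
  {x : ℝ | x ∈ Set.Ioc (0 : ℝ) 1 ∧
    ∃ a : ℕ → ℕ,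
      (∀ i, i < m → 1 ≤ a i) ∧
      (∀ i j, i < j → j < m → a i < a j) ∧
      x = ∑ i ∈ Finset.range m, (1 : ℝ) / (a i : ℝ) ∧
      ∀ ℓ, ℓ < m →
        (∑ i ∈ Finset.range (ℓ + 1), (1 : ℝ) / (a i : ℝ)) ≤ x ∧
        ((a ℓ : ℝ) - 1) * (x - ∑ i ∈ Finset.range ℓ, (1 : ℝ) / (a i : ℝ)) < 1}

/-- The greedy condition without the range restriction. -/
def GP (m : ℕ) (x : ℝ) : Prop :=
    ∃ a : ℕ → ℕ,
      (∀ i, i < m → 1 ≤ a i) ∧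
      (∀ i j, i < j → j < m → a i < a j) ∧
      x = ∑ i ∈ Finset.range m, (1 : ℝ) / (a i : ℝ) ∧
      ∀ ℓ, ℓ < m →
        (∑ i ∈ Finset.range (ℓ + 1), (1 : ℝ) / (a i : ℝ)) ≤ x ∧
        ((a ℓ : ℝ) - 1) * (x - ∑ i ∈ Finset.range ℓ, (1 : ℝ) / (a i : ℝ)) < 1

lemma GP_zero : GP 0 0 := ⟨fun _ => 1, by simp, by simp, by simp, by simp⟩

lemma GP_pos {m : ℕ} (hm : 0 < m) {x : ℝ} (h : GP m x) : 0 < x := by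
  obtain ⟨a, h1, h2, h3, h4⟩ := h
  rw [h3]
  apply Finset.sum_pos
  · intro i hi
    have := h1 i (Finset.mem_range.1 hi)
    have : (0:ℝ) < a i := by exact_mod_cast this
    positivity
  · exact ⟨0, Finset.mem_range.2 hm⟩

lemma GP_succ {m : ℕ} {y : ℝ} (h : GP m y) (n : ℕ) (hn : 2 ≤ n) (hy : 0 ≤ y)
    (hlt : y * ((n : ℝ) * (n - 1)) < 1) : GP (m + 1) (1 / n + y) := by
  obtain ⟨b, h1, h2, h3, h4⟩ := h
  have hn' : (2:ℝ) ≤ n := by exact_mod_cast hn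
  have hb : 0 < m → n < b 0 := by
    intro hm
    have hb1 := (h4 0 hm).1
    simp only [zero_add, Finset.range_one, Finset.sum_singleton] at hb1
    have hb0 : (0:ℝ) < b 0 := by exact_mod_cast h1 0 hm
    rw [div_le_iff₀ hb0] at hb1
    have : (n:ℝ) < b 0 := by
      by_contra hc
      push Not at hc
      have : y * b 0 ≤ y * ((n : ℝ) * (n - 1)) := by
        apply mul_le_mul_of_nonneg_left _ hy
        nlinarith
      linarith
    exact_mod_cast this
  obtain ⟨c, hc0, hcs⟩ : ∃ c : ℕ → ℕ, c 0 = n ∧ ∀ i, c (i + 1) = b i :=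
    ⟨fun i => Nat.casesOn i n b, rfl, fun _ => rfl⟩
  have hsum : ∀ l, ∑ i ∈ Finset.range (l + 1), (1 : ℝ) / (c i : ℝ) =
      ∑ i ∈ Finset.range l, (1 : ℝ) / (b i : ℝ) + 1 / n := by
    intro l
    rw [Finset.sum_range_succ', hc0]
    simp only [hcs]
  refine ⟨c, ?_, ?_, ?_, ?_⟩
  · rintro (_ | i) hi
    · omega
    · rw [hcs]; exact h1 i (by omega)
  · rintro (_ | i) (_ | j) hij hj
    · omega
    · have h0 := hb (by omega)
      rw [hc0, hcs]
      rcases Nat.eq_zero_or_pos j with rfl | hj0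
      · exact h0
      · exact h0.trans (h2 0 j hj0 (by omega))
    · omega
    · rw [hcs, hcs]; exact h2 i j (by omega) (by omega)
  · rw [hsum, ← h3]
    ring
  · rintro (_ | l) hl
    · rw [hsum, hc0]
      simp only [Finset.range_zero, Finset.sum_empty]
      refine ⟨by linarith, ?_⟩
      have hpos : (0:ℝ) < n := by linarith
      have : ((n:ℝ) - 1) * (1 / n + y - 0) = (n - 1 + y * (n * (n - 1))) / n := by
        field_simp
        ring
      rw [this, div_lt_one hpos]
      linarith
    · have := h4 l (by omega)
      rw [hsum, hsum, hcs]
      refine ⟨by linarith [this.1], ?_⟩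
      convert this.2 using 2
      ring

lemma GP_pred {m : ℕ} {x : ℝ} (h : GP (m + 1) x) :
    ∃ n : ℕ, 1 ≤ n ∧ ((n : ℝ) - 1) * x < 1 ∧ GP m (x - 1 / n) := by
  obtain ⟨a, h1, h2, h3, h4⟩ := h
  refine ⟨a 0, h1 0 (by omega), ?_, fun i => a (i + 1), ?_, ?_, ?_, ?_⟩
  · simpa using (h4 0 (by omega)).2
  · exact fun i hi => h1 (i + 1) (by omega)
  · exact fun i j hij hj => h2 (i + 1) (j + 1) (by omega) (by omega)
  · rw [h3, Finset.sum_range_succ']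
    ring
  · intro l hl
    have := h4 (l + 1) (by omega)
    have e1 := Finset.sum_range_succ' (fun i => (1 : ℝ) / (a i : ℝ)) (l + 1)
    have e2 := Finset.sum_range_succ' (fun i => (1 : ℝ) / (a i : ℝ)) l
    rw [e1, e2] at this
    refine ⟨by linarith [this.1], ?_⟩
    convert this.2 using 2
    ring

lemma GP_approx (m : ℕ) : ∀ x : ℝ, Irrational x → 0 < x → x < 1 →
    ∃ y, GP m y ∧ 0 ≤ y ∧ y ≤ x ∧ x - y ≤ x ^ (2 ^ m) := by
  induction m with
  | zero => intro x _ h0 _; exact ⟨0, GP_zero, le_rfl, h0.le, by simp⟩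
  | succ m ih =>
    intro x hx h0 h1
    set n := ⌈1 / x⌉₊ with hn
    have hn1 : 1 / x ≤ n := Nat.le_ceil _
    have hn2 : (n:ℝ) < 1 / x + 1 := Nat.ceil_lt_add_one (by positivity)
    have hx1 : 1 < 1 / x := by rw [lt_div_iff₀ h0]; linarith
    have hn3 : 1 < n := by
      have : (1:ℝ) < n := by linarith
      exact_mod_cast this
    have hnp : (0:ℝ) < n := by linarith
    rw [div_le_iff₀ h0] at hn1
    have hn2' : (n - 1) * x < 1 := by
      rw [← lt_div_iff₀ h0]; linarith
    set r := x - 1 / n with hr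
    have hri : Irrational r := by
      have := hx.sub_ratCast (1 / (n:ℚ))
      push_cast at this
      exact this
    have hr0 : 0 ≤ r := by
      rw [hr, sub_nonneg, div_le_iff₀ hnp]; linarith
    have hr0' : 0 < r := lt_of_le_of_ne hr0 (fun h => hri.ne_zero h.symm)
    have hnr : n * r = n * x - 1 := by rw [hr]; field_simp
    have hr2 : r ≤ x ^ 2 := by
      -- n r = n x - 1 < x
      have h3 : n * r < x := by rw [hnr]; linarith
      have h4 : r * 1 ≤ r * (n * x) := by gcongr
      nlinarith
    obtain ⟨y, hy, hy0, hyr, hyd⟩ := ih r hri hr0' (by nlinarith)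
    have hn1' : (1:ℝ) < n := by exact_mod_cast hn3
    refine ⟨1 / n + y, GP_succ hy n hn3 hy0 ?_, by positivity, by linarith, ?_⟩
    · calc y * ((n:ℝ) * (n - 1)) ≤ r * ((n:ℝ) * (n - 1)) := by
            apply mul_le_mul_of_nonneg_right hyr
            nlinarith
        _ = (n - 1) * (n * r) := by ring
        _ = (n - 1) * (n * x - 1) := by rw [hnr]
        _ < 1 := by nlinarith
    · calc x - (1 / n + y) = r - y := by rw [hr]; ring
        _ ≤ r ^ (2 ^ m) := hyd
        _ ≤ (x ^ 2) ^ (2 ^ m) := by gcongr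
        _ = x ^ (2 ^ (m + 1)) := by rw [← pow_mul, pow_succ']

lemma lower_bound (m : ℕ) (hm : 0 < m) (δ : ℝ) (h0 : 0 < δ) (h1 : δ < 1) :
    ENNReal.ofReal (δ ^ ((1:ℝ) / 2 ^ m)) ≤ volume (closedNbhd (Eset m) δ) := by
  have hs : (0:ℝ) < (1:ℝ) / 2 ^ m := by positivity
  have hc : volume (Set.range ((↑) : ℚ → ℝ)) = 0 := (Set.countable_range _).measure_zero _
  have : volume (Ioo 0 (δ ^ ((1:ℝ) / 2 ^ m)) \ Set.range ((↑) : ℚ → ℝ)) =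
      ENNReal.ofReal (δ ^ ((1:ℝ) / 2 ^ m)) := by
    rw [measure_sdiff_null hc, Real.volume_Ioo, sub_zero]
  rw [← this]
  apply measure_mono
  rintro x ⟨⟨hx0, hx1⟩, hxi⟩
  have hlt : x < 1 := hx1.trans (Real.rpow_lt_one h0.le h1 hs)
  obtain ⟨y, hy, hy0, hyx, hyd⟩ := GP_approx m x hxi hx0 hlt
  refine ⟨y, ⟨⟨GP_pos hm hy, by linarith⟩, hy⟩, ?_⟩
  rw [abs_of_nonneg (by linarith)]
  refine hyd.trans ?_
  calc x ^ (2 ^ m) ≤ (δ ^ ((1:ℝ) / 2 ^ m)) ^ (2 ^ m) := by gcongr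
    _ = δ := by
      rw [← Real.rpow_natCast, ← Real.rpow_mul h0.le]
      simp

lemma upper_bound (m : ℕ) : ∃ C : ℝ, 0 < C ∧ ∀ δ : ℝ, 0 < δ → δ < 1 →
    volume (closedNbhd {x | x ≤ 1 ∧ (GP m x ∨ x = 0)} δ)
      ≤ ENNReal.ofReal (C * δ ^ ((1:ℝ) / 2 ^ m)) := by
  induction m with
  | zero =>
    refine ⟨2, by norm_num, fun δ h0 h1 => ?_⟩
    have : closedNbhd {x | x ≤ 1 ∧ (GP 0 x ∨ x = 0)} δ ⊆ Icc (-δ) δ := by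
      rintro x ⟨y, ⟨-, hy⟩, hxy⟩
      have : y = 0 := by
        rcases hy with ⟨a, -, -, h, -⟩ | h
        · simpa using h
        · exact h
      subst this
      rw [sub_zero] at hxy
      exact abs_le.1 hxy
    refine (measure_mono this).trans ?_
    rw [Real.volume_Icc]
    apply ENNReal.ofReal_le_ofReal
    simp; linarith
  | succ m ih =>
    obtain ⟨C, hC, ih⟩ := ih
    refine ⟨2 * C + 3, by linarith, fun δ h0 h1 => ?_⟩
    set s := δ ^ ((1:ℝ) / 2 ^ (m + 1)) with hs
    have hs0 : 0 < s := Real.rpow_pos_of_pos h0 _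
    have hs1 : s < 1 := Real.rpow_lt_one h0.le h1 (by positivity)
    have hss : δ ^ ((1:ℝ) / 2 ^ m) = s * s := by
      rw [hs, ← Real.rpow_add h0]
      congr 1
      field_simp
      ring
    have hds : δ ≤ s := by
      conv_lhs => rw [← Real.rpow_one δ]
      apply Real.rpow_le_rpow_of_exponent_ge h0 h1.le
      rw [div_le_one (by positivity)]
      exact one_le_pow₀ (by norm_num)
    set A := ⌈1 / s⌉₊ with hA
    have hA1 : 1 / s ≤ A := Nat.le_ceil _
    have hA2 : (A:ℝ) < 1 / s + 1 := Nat.ceil_lt_add_one (by positivity)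
    have hAp : (0:ℝ) < A := lt_of_lt_of_le (by positivity) hA1
    have hA3 : A * s ≤ 2 := by
      have : A * s ≤ (1 / s + 1) * s := by gcongr
      have h2 : (1 / s + 1) * s = 1 + s := by field_simp
      linarith
    have hAs : 1 / (A:ℝ) ≤ s := by
      rw [div_le_iff₀ hs0] at hA1
      rw [div_le_iff₀ hAp]; linarith
    set W := closedNbhd {x | x ≤ 1 ∧ (GP m x ∨ x = 0)} δ with hW
    have hsub : closedNbhd {x | x ≤ 1 ∧ (GP (m + 1) x ∨ x = 0)} δ ⊆
        (⋃ n ∈ Finset.Icc 1 A, (fun x => (-(1 / (n:ℝ))) + x) ⁻¹' W) ∪ Icc (-δ) (s + δ) := by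
      rintro x ⟨y, ⟨hy1, hy⟩, hxy⟩
      rcases hy with hy | rfl
      · obtain ⟨n, hn, hny, hg⟩ := GP_pred hy
        have hyp := GP_pos (by omega) hy
        by_cases hnA : n ≤ A
        · left
          simp only [mem_iUnion]
          refine ⟨n, Finset.mem_Icc.2 ⟨hn, hnA⟩, y - 1 / n, ⟨?_, Or.inl hg⟩, ?_⟩
          · have : (0:ℝ) ≤ 1 / n := by positivity
            linarith
          · convert hxy using 2
            ring
        · right
          have h3 : (A:ℝ) + 1 ≤ n := by exact_mod_cast (by omega : A + 1 ≤ n)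
          have h4 : y ≤ 1 / A := by
            rw [le_div_iff₀ hAp]; nlinarith
          rw [abs_le] at hxy
          exact ⟨by linarith, by linarith⟩
      · right
        rw [sub_zero, abs_le] at hxy
        exact ⟨hxy.1, by linarith⟩
    refine (measure_mono hsub).trans ((measure_union_le _ _).trans ?_)
    have hU : volume (⋃ n ∈ Finset.Icc 1 A, (fun x => (-(1 / (n:ℝ))) + x) ⁻¹' W) ≤
        ENNReal.ofReal (A * (C * (s * s))) := by
      refine (measure_biUnion_finset_le _ _).trans ?_
      simp only [measure_preimage_add]
      rw [Finset.sum_const, Nat.card_Icc, Nat.add_sub_cancel, nsmul_eq_mul,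
        ENNReal.ofReal_mul (by positivity), ENNReal.ofReal_natCast, ← hss]
      gcongr
      exact ih δ h0 h1
    rw [Real.volume_Icc]
    refine (add_le_add_left hU _).trans ?_
    rw [← ENNReal.ofReal_add (by positivity) (by linarith)]
    apply ENNReal.ofReal_le_ofReal
    have : A * (C * (s * s)) ≤ 2 * (C * s) := by
      calc A * (C * (s * s)) = (A * s) * (C * s) := by ring
        _ ≤ 2 * (C * s) := by gcongr
    linarith

/-- The Minkowski dimension of `E_m` is `1 - 1/2^m`:
`lim_{δ → 0⁺} log λ(V_δ(E_m)) / log δ = 1/2^m`. -/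
theorem minkowski_dim_Em (m : ℕ) (hm : 0 < m) :
    Tendsto (fun δ : ℝ => Real.log (volume (closedNbhd (Eset m) δ)).toReal / Real.log δ)
      (nhdsWithin (0 : ℝ) (Set.Ioi 0)) (nhds ((1 : ℝ) / 2 ^ m)) := by
  obtain ⟨C, hC, hup⟩ := upper_bound m
  have hlim : Tendsto (fun δ : ℝ => Real.log C / Real.log δ + (1:ℝ) / 2 ^ m)
      (nhdsWithin (0 : ℝ) (Set.Ioi 0)) (nhds ((1 : ℝ) / 2 ^ m)) := by
    have h := (Real.tendsto_log_nhdsGT_zero.const_div_atBot (Real.log C)).add_const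
      ((1:ℝ) / 2 ^ m)
    simpa using h
  have hev : ∀ᶠ δ : ℝ in nhdsWithin (0 : ℝ) (Set.Ioi 0), 0 < δ ∧ δ < 1 :=
    Ioo_mem_nhdsGT (zero_lt_one)
  refine tendsto_of_tendsto_of_tendsto_of_le_of_le' hlim tendsto_const_nhds ?_ ?_
  all_goals
    filter_upwards [hev] with δ hδ
    obtain ⟨h0, h1⟩ := hδ
    have hlog : Real.log δ < 0 := Real.log_neg h0 h1
    have hp : 0 < δ ^ ((1:ℝ) / 2 ^ m) := Real.rpow_pos_of_pos h0 _
    have hu : volume (closedNbhd (Eset m) δ) ≤ ENNReal.ofReal (C * δ ^ ((1:ℝ) / 2 ^ m)) := by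
      refine le_trans (measure_mono ?_) (hup δ h0 h1)
      rintro x ⟨y, ⟨hy1, hy2⟩, hxy⟩
      exact ⟨y, ⟨hy1.2, Or.inl hy2⟩, hxy⟩
    have hl := lower_bound m hm δ h0 h1
    have hfin : volume (closedNbhd (Eset m) δ) ≠ ⊤ := ne_top_of_le_ne_top ENNReal.ofReal_ne_top hu
    have hl' := (ENNReal.ofReal_le_iff_le_toReal hfin).1 hl
    have hu' := ENNReal.toReal_le_of_le_ofReal (by positivity) hu
  · have := Real.log_le_log (by linarith) hu'
    rw [Real.log_mul hC.ne' hp.ne', Real.log_rpow h0] at this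
    rw [le_div_iff_of_neg hlog, add_mul, div_mul_cancel₀ _ hlog.ne]
    exact this
  · have := Real.log_le_log hp hl'
    rw [Real.log_rpow h0] at this
    rw [div_le_iff_of_neg hlog]
    exact this
end

section
/- For every positive integer m, the Minkowski dimension of A_m equals 1 − 1/2^m; equivalently, lim_{δ→0⁺} log λ(V_δ(A_m)) / log δ = 1/2^m. -/
open MeasureTheory Filter Set

/-- `A_m = ⋃_{p=0}^m E_p`, where `E_0 = {0}`. -/
def Aset (m : ℕ) : Set ℝ := {0} ∪ ⋃ (p : ℕ) (_ : 1 ≤ p) (_ : p ≤ m), Eset p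

/-- Sums of `m` unit fractions (with `1/0 = 0`). -/
def Bset (m : ℕ) : Set ℝ := Set.range (fun a : Fin m → ℕ => ∑ i, (1 : ℝ) / (a i : ℝ))

lemma Aset_subset_Bset (m : ℕ) : Aset m ⊆ Bset m := by
  rintro x (hx | hx)
  · refine ⟨fun _ => 0, ?_⟩
    simp at hx ⊢
    exact hx.symm
  · simp only [Set.mem_iUnion] at hx
    obtain ⟨p, h1, h2, _, a, _, _, h, _⟩ := hx
    refine ⟨fun i => if (i : ℕ) < p then a i else 0, ?_⟩
    simp only
    rw [h, Fin.sum_univ_eq_sum_range (fun i => (1 : ℝ) / ((if i < p then a i else 0 : ℕ) : ℝ)) m]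
    symm
    rw [← Finset.sum_subset (Finset.range_mono h2)]
    · apply Finset.sum_congr rfl
      intro i hi
      rw [if_pos (Finset.mem_range.1 hi)]
    · intro i _ hi
      rw [if_neg (by simpa using hi)]
      simp

lemma nbhd_B_zero (δ : ℝ) : closedNbhd (Bset 0) δ ⊆ Set.Icc (-δ) δ := by
  rintro x ⟨y, ⟨a, rfl⟩, h⟩
  simp at h
  exact abs_le.1 h

lemma nbhd_B_succ (m N : ℕ) (δ : ℝ) :
    closedNbhd (Bset (m + 1)) δ ⊆ Set.Icc (-δ) ((m + 1) / (N + 1) + δ) ∪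
      ⋃ a ∈ Finset.range (N + 1), (fun x : ℝ => x + (-(1 / (a : ℝ)))) ⁻¹' closedNbhd (Bset m) δ := by
  rintro x ⟨y, ⟨a, rfl⟩, h⟩
  by_cases hs : ∃ i, a i ≤ N
  · obtain ⟨i, hi⟩ := hs
    right
    simp only [Set.mem_iUnion]
    refine ⟨a i, Finset.mem_range.2 (by omega), _, ⟨fun j => a (i.succAbove j), rfl⟩, ?_⟩
    simp only at h ⊢
    rw [Fin.sum_univ_succAbove _ i] at h
    convert h using 2
    ring
  · left
    push Not at hs
    have h0 : 0 ≤ ∑ i, (1 : ℝ) / (a i : ℝ) := Finset.sum_nonneg fun i _ => by positivity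
    have h1 : ∑ i, (1 : ℝ) / (a i : ℝ) ≤ (m + 1) / (N + 1) := by
      calc ∑ i, (1 : ℝ) / (a i : ℝ) ≤ ∑ i : Fin (m + 1), (1 : ℝ) / (N + 1) := by
            apply Finset.sum_le_sum
            intro i _
            apply one_div_le_one_div_of_le (by positivity)
            exact_mod_cast hs i
        _ = _ := by simp; ring
    have := abs_le.1 h
    simp only at this
    constructor <;> linarith [this.1, this.2]

lemma upper_B (m : ℕ) : ∃ C : ℝ, 0 < C ∧ ∀ δ : ℝ, 0 < δ → δ < 1 →
    volume (closedNbhd (Bset m) δ) ≤ ENNReal.ofReal (C * δ ^ ((1 : ℝ) / 2 ^ m)) := by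
  induction m with
  | zero =>
    refine ⟨2, by norm_num, fun δ h0 h1 => (measure_mono (nbhd_B_zero δ)).trans ?_⟩
    rw [Real.volume_Icc]
    apply ENNReal.ofReal_le_ofReal
    simp
    linarith
  | succ m ih =>
    obtain ⟨C, hC, ih⟩ := ih
    refine ⟨2 * C + m + 3, by positivity, fun δ h0 h1 => ?_⟩
    set s : ℝ := (1 : ℝ) / 2 ^ (m + 1) with hs
    have hs0 : 0 < s := by positivity
    have hs1 : s ≤ 1 := by
      rw [hs, div_le_one (by positivity)]
      exact one_le_pow₀ (by norm_num)
    have h2s : (1 : ℝ) / 2 ^ m = s + s := by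
      rw [hs, pow_succ]; field_simp; norm_num
    set t := δ ^ s with ht
    have ht0 : 0 < t := Real.rpow_pos_of_pos h0 s
    have ht1 : t ≤ 1 := Real.rpow_le_one h0.le h1.le hs0.le
    have hδt : δ ≤ t := by
      have := Real.rpow_le_rpow_of_exponent_ge h0 h1.le hs1
      simpa using this
    set N := ⌊1 / t⌋₊ with hN
    have hN1 : (N : ℝ) ≤ 1 / t := Nat.floor_le (by positivity)
    have hN2 : 1 / t < N + 1 := Nat.lt_floor_add_one _
    have hIcc : volume (Set.Icc (-δ) (((m : ℝ) + 1) / (N + 1) + δ))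
        ≤ ENNReal.ofReal ((m + 3) * t) := by
      rw [Real.volume_Icc]
      apply ENNReal.ofReal_le_ofReal
      have : ((m : ℝ) + 1) / (N + 1) ≤ (m + 1) * t := by
        rw [div_le_iff₀ (by positivity)]
        rw [div_lt_iff₀ ht0] at hN2
        nlinarith [(Nat.cast_nonneg m : (0 : ℝ) ≤ m)]
      linarith
    have hU : volume (⋃ a ∈ Finset.range (N + 1),
        (fun x : ℝ => x + (-(1 / (a : ℝ)))) ⁻¹' closedNbhd (Bset m) δ)
        ≤ ENNReal.ofReal (2 * C * t) := by
      refine (measure_biUnion_finset_le _ _).trans ?_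
      simp only [measure_preimage_add_right]
      rw [Finset.sum_const, Finset.card_range, nsmul_eq_mul]
      refine (mul_le_mul_right (ih δ h0 h1) _).trans ?_
      rw [← ENNReal.ofReal_natCast, ← ENNReal.ofReal_mul (by positivity)]
      apply ENNReal.ofReal_le_ofReal
      rw [h2s, Real.rpow_add h0, ← ht]
      push_cast
      have : ((N : ℝ) + 1) * t ≤ 2 := by
        rw [le_div_iff₀ ht0] at hN1
        linarith
      nlinarith [mul_pos hC ht0]
    refine (measure_mono (nbhd_B_succ m N δ)).trans ((measure_union_le _ _).trans
      ((add_le_add hIcc hU).trans ?_))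
    rw [← ENNReal.ofReal_add (by positivity) (by positivity)]
    apply ENNReal.ofReal_le_ofReal
    linarith

/-- The greedy digit predicate. -/
def Gp (m : ℕ) (x : ℝ) : Prop :=
    ∃ a : ℕ → ℕ,
      (∀ i, i < m → 1 ≤ a i) ∧
      (∀ i j, i < j → j < m → a i < a j) ∧
      x = ∑ i ∈ Finset.range m, (1 : ℝ) / (a i : ℝ) ∧
      ∀ ℓ, ℓ < m →
        (∑ i ∈ Finset.range (ℓ + 1), (1 : ℝ) / (a i : ℝ)) ≤ x ∧
        ((a ℓ : ℝ) - 1) * (x - ∑ i ∈ Finset.range ℓ, (1 : ℝ) / (a i : ℝ)) < 1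

lemma Gp_zero : Gp 0 0 := ⟨fun _ => 1, by simp⟩

lemma Gp_nonneg {p : ℕ} {x : ℝ} (h : Gp p x) : 0 ≤ x := by
  obtain ⟨a, _, _, rfl, _⟩ := h
  exact Finset.sum_nonneg fun i _ => by positivity

lemma Gp_mem {p m : ℕ} {x : ℝ} (h : Gp p x) (hp : p ≤ m) (hx : x ≤ 1) : x ∈ Aset m := by
  rcases Nat.eq_zero_or_pos p with rfl | h0
  · obtain ⟨a, _, _, rfl, _⟩ := h
    left; simp
  · right
    simp only [Set.mem_iUnion]
    refine ⟨p, h0, hp, ⟨?_, hx⟩, h⟩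
    obtain ⟨a, h1, _, rfl, _⟩ := h
    apply Finset.sum_pos
    · intro i hi
      have := h1 i (Finset.mem_range.1 hi)
      positivity
    · exact ⟨0, by simpa using h0⟩

lemma Gp_cons {p a : ℕ} {y : ℝ} (h : Gp p y) (ha : 1 ≤ a) (hya : y < 1 / a)
    (hg : ((a : ℝ) - 1) * (1 / a + y) < 1) : Gp (p + 1) (1 / a + y) := by
  have hy0 := Gp_nonneg h
  obtain ⟨b, h1, h2, h3, h4⟩ := h
  have hlt : ∀ j, j < p → a < b j := by
    intro j hj
    have hb : (1 : ℝ) / b j ≤ y := by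
      rw [h3]
      exact Finset.single_le_sum (f := fun i => (1 : ℝ) / (b i : ℝ))
        (fun i _ => by positivity) (Finset.mem_range.2 hj)
    have hb0 : (0 : ℝ) < b j := by exact_mod_cast h1 j hj
    have := lt_of_one_div_lt_one_div hb0 (hb.trans_lt hya)
    exact_mod_cast this
  obtain ⟨c, hc0, hcs⟩ : ∃ c : ℕ → ℕ, c 0 = a ∧ ∀ i, c (i + 1) = b i :=
    ⟨fun i => Nat.casesOn i a b, rfl, fun _ => rfl⟩
  have hsum : ∀ n, ∑ i ∈ Finset.range (n + 1), (1 : ℝ) / (c i : ℝ) =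
      1 / a + ∑ i ∈ Finset.range n, (1 : ℝ) / (b i : ℝ) := by
    intro n
    rw [Finset.sum_range_succ', hc0, add_comm]
    simp only [hcs]
  refine ⟨c, ?_, ?_, ?_, ?_⟩
  · rintro (_ | i) hi
    · rw [hc0]; exact ha
    · rw [hcs]; exact h1 i (by omega)
  · rintro (_ | i) (_ | j) hij hj
    · omega
    · rw [hc0, hcs]; exact hlt j (by omega)
    · omega
    · rw [hcs, hcs]; exact h2 i j (by omega) (by omega)
  · rw [hsum, ← h3]
  · rintro (_ | l) hl
    · rw [hsum, hc0]
      simp only [Finset.range_zero, Finset.sum_empty, add_zero, sub_zero]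
      exact ⟨by linarith, hg⟩
    · obtain ⟨h5, h6⟩ := h4 l (by omega)
      rw [hsum, hsum, hcs]
      constructor
      · linarith
      · rwa [add_sub_add_left_eq_sub]

lemma approx (m : ℕ) : ∀ x : ℝ, 0 ≤ x → x < 1 →
    ∃ p ≤ m, ∃ y, Gp p y ∧ y ≤ x ∧ 2 * (x - y) ≤ (2 * x) ^ (2 ^ m) := by
  induction m with
  | zero => intro x h0 _; exact ⟨0, le_rfl, 0, Gp_zero, h0, by simp⟩
  | succ m ih =>
    intro x h0 h1
    rcases h0.eq_or_lt with rfl | h0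
    · exact ⟨0, by omega, 0, Gp_zero, le_rfl, by simp⟩
    set a := ⌈1 / x⌉₊ with ha
    have ha1 : 1 / x ≤ a := Nat.le_ceil _
    have ha2 : (a : ℝ) < 1 / x + 1 := Nat.ceil_lt_add_one (by positivity)
    have hx1 : 1 < 1 / x := by rw [lt_div_iff₀ h0]; linarith
    have ha3 : 2 ≤ a := by
      have : (1 : ℝ) < a := by linarith
      exact_mod_cast this
    have ha3' : (2 : ℝ) ≤ a := by exact_mod_cast ha3
    have hax : 1 ≤ a * x := by rwa [div_le_iff₀ h0] at ha1
    have hax2 : ((a : ℝ) - 1) * x < 1 := by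
      rw [← lt_div_iff₀ h0]; linarith
    set r := x - 1 / a with hr
    have har : a * r = a * x - 1 := by rw [hr]; field_simp
    have hr0 : 0 ≤ r := by
      rw [hr, sub_nonneg, div_le_iff₀ (by linarith)]; linarith
    have hra : r < 1 / a := by
      rw [lt_div_iff₀ (by linarith)]
      nlinarith
    have hrx : r ≤ 2 * x ^ 2 := by
      nlinarith
    obtain ⟨p, hp, y, hG, hyr, hy⟩ := ih r hr0 (by
      have : (0 : ℝ) < 1 / a := by positivity
      linarith)
    refine ⟨p + 1, by omega, 1 / a + y, Gp_cons hG (by omega) (by linarith) ?_, by linarith, ?_⟩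
    · refine lt_of_le_of_lt ?_ hax2
      apply mul_le_mul_of_nonneg_left <;> linarith
    · calc 2 * (x - (1 / a + y)) = 2 * (r - y) := by rw [hr]; ring
        _ ≤ (2 * r) ^ (2 ^ m) := hy
        _ ≤ ((2 * x) ^ 2) ^ (2 ^ m) := by
          apply pow_le_pow_left₀ (by linarith)
          nlinarith
        _ = _ := by rw [← pow_mul]; congr 1; ring

lemma lower_A (m : ℕ) (δ : ℝ) (h0 : 0 < δ) (h1 : δ < 1) :
    ENNReal.ofReal (1 / 2 * δ ^ ((1 : ℝ) / 2 ^ m)) ≤ volume (closedNbhd (Aset m) δ) := by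
  set t := δ ^ ((1 : ℝ) / 2 ^ m) with ht
  have ht0 : 0 < t := Real.rpow_pos_of_pos h0 _
  have ht1 : t ≤ 1 := Real.rpow_le_one h0.le h1.le (by positivity)
  have htp : t ^ (2 ^ m) = δ := by
    rw [ht, ← Real.rpow_natCast, ← Real.rpow_mul h0.le]
    simp
  have : Set.Icc 0 (1 / 2 * t) ⊆ closedNbhd (Aset m) δ := by
    rintro x ⟨hx0, hx1⟩
    obtain ⟨p, hp, y, hG, hyx, hy⟩ := approx m x hx0 (by linarith)
    refine ⟨y, Gp_mem hG hp (by linarith), ?_⟩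
    have : (2 * x) ^ (2 ^ m) ≤ t ^ (2 ^ m) := pow_le_pow_left₀ (by linarith) (by linarith) _
    rw [abs_of_nonneg (by linarith)]
    linarith
  refine le_trans ?_ (measure_mono this)
  rw [Real.volume_Icc]
  simp

/-- The Minkowski dimension of `A_m` is `1 - 1/2^m`:
`lim_{δ → 0⁺} log λ(V_δ(A_m)) / log δ = 1/2^m`. -/
theorem minkowski_dim_Am (m : ℕ) (hm : 0 < m) :
    Tendsto (fun δ : ℝ => Real.log (volume (closedNbhd (Aset m) δ)).toReal / Real.log δ)
      (nhdsWithin (0 : ℝ) (Set.Ioi 0)) (nhds ((1 : ℝ) / 2 ^ m)) := by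
  obtain ⟨C, hC, hup⟩ := upper_B m
  set s : ℝ := (1 : ℝ) / 2 ^ m with hs
  have hlog : Tendsto Real.log (nhdsWithin (0 : ℝ) (Set.Ioi 0)) atBot :=
    Real.tendsto_log_nhdsGT_zero
  have hk : ∀ k : ℝ, Tendsto (fun δ : ℝ => s + k / Real.log δ)
      (nhdsWithin (0 : ℝ) (Set.Ioi 0)) (nhds s) := by
    intro k
    have := (hlog.const_div_atBot k).const_add s
    simpa using this
  have hev : ∀ᶠ δ : ℝ in nhdsWithin (0 : ℝ) (Set.Ioi 0), 0 < δ ∧ δ < 1 :=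
    Ioo_mem_nhdsGT one_pos
  have key : ∀ δ : ℝ, 0 < δ → δ < 1 →
      1 / 2 * δ ^ s ≤ (volume (closedNbhd (Aset m) δ)).toReal ∧
      (volume (closedNbhd (Aset m) δ)).toReal ≤ C * δ ^ s := by
    intro δ h0 h1
    have hl := lower_A m δ h0 h1
    have hu : volume (closedNbhd (Aset m) δ) ≤ ENNReal.ofReal (C * δ ^ s) := by
      refine (measure_mono ?_).trans (hup δ h0 h1)
      rintro x ⟨y, hy, h⟩
      exact ⟨y, Aset_subset_Bset m hy, h⟩
    have hfin := ne_top_of_le_ne_top ENNReal.ofReal_ne_top hu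
    have hp := Real.rpow_pos_of_pos h0 s
    exact ⟨(ENNReal.ofReal_le_iff_le_toReal hfin).1 hl,
      ENNReal.toReal_le_of_le_ofReal (by positivity) hu⟩
  refine tendsto_of_tendsto_of_tendsto_of_le_of_le' (hk (Real.log C)) (hk (Real.log (1 / 2))) ?_ ?_
  · filter_upwards [hev] with δ ⟨h0, h1⟩
    obtain ⟨hl, hu⟩ := key δ h0 h1
    have hp := Real.rpow_pos_of_pos h0 s
    have hneg := Real.log_neg h0 h1
    have h := Real.log_le_log (by linarith) hu
    rw [Real.log_mul hC.ne' hp.ne', Real.log_rpow h0] at h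
    rw [le_div_iff_of_neg hneg, add_mul, div_mul_cancel₀ _ hneg.ne]
    linarith
  · filter_upwards [hev] with δ ⟨h0, h1⟩
    obtain ⟨hl, hu⟩ := key δ h0 h1
    have hp := Real.rpow_pos_of_pos h0 s
    have hneg := Real.log_neg h0 h1
    have h := Real.log_le_log (by linarith) hl
    rw [Real.log_mul (by norm_num) hp.ne', Real.log_rpow h0] at h
    rw [div_le_iff_of_neg hneg, add_mul, div_mul_cancel₀ _ hneg.ne]
    linarith
end

section
/- For every positive integer m, the Minkowski dimension of F_m equals 1 − 1/2^m; equivalently, lim_{δ→0⁺} log λ(V_δ(F_m)) / log δ = 1/2^m. -/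
open MeasureTheory Filter Set

/-- `F = {1/n : n ∈ ℕ, n ≥ 1} ∪ {0}`. -/
def Fset : Set ℝ := {0} ∪ {x : ℝ | ∃ n : ℕ, 0 < n ∧ x = 1 / (n : ℝ)}

/-- `F_m = F + ⋯ + F` (`m`-fold arithmetic sumset). -/
def FsumSet (m : ℕ) : Set ℝ :=
  {x : ℝ | ∃ a : Fin m → ℝ, (∀ i, a i ∈ Fset) ∧ x = ∑ i, a i}

theorem lower_aux (m : ℕ) : ∀ s : ℝ, 0 < s → s ≤ 1 →
    Icc 0 s ⊆ closedNbhd (FsumSet m) (s ^ (2 ^ m)) := by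
  induction m with
  | zero =>
    intro s hs hs1 x hx
    refine ⟨0, ⟨fun _ => 0, fun i => Or.inl rfl, by simp⟩, ?_⟩
    rw [sub_zero, abs_of_nonneg hx.1]
    simpa using hx.2
  | succ m ih =>
    intro s hs hs1 x hx
    have key : ∃ b ∈ Fset, x - b ∈ Icc (0:ℝ) (s ^ 2) := by
      rcases eq_or_lt_of_le hx.1 with h0 | h0
      · exact ⟨0, Or.inl rfl, by rw [← h0]; simp; positivity⟩
      · have h1 : 1 / x ≤ (⌈1 / x⌉₊ : ℝ) := Nat.le_ceil _
        have h2 : (⌈1 / x⌉₊ : ℝ) < 1 / x + 1 := Nat.ceil_lt_add_one (by positivity)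
        have h3 : 0 < ⌈1 / x⌉₊ := Nat.ceil_pos.2 (by positivity)
        refine ⟨1 / (⌈1 / x⌉₊ : ℝ), Or.inr ⟨_, h3, rfl⟩, ?_⟩
        have h4 : (0:ℝ) < ⌈1 / x⌉₊ := by exact_mod_cast h3
        generalize (⌈1 / x⌉₊ : ℝ) = N at *
        have h5 : 1 ≤ N * x := by rwa [div_le_iff₀ h0] at h1
        have h6 : N * x ≤ 1 + x := by
          have := mul_le_mul_of_nonneg_right h2.le h0.le
          rwa [add_mul, div_mul_cancel₀ _ h0.ne', one_mul] at this
        have h7 : 1 / N ≤ x := by rw [div_le_iff₀ h4]; linarith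
        have h8 : x - 1 / N ≤ x ^ 2 := by
          have : x - 1 / N = (N * x - 1) / N := by field_simp
          rw [this, div_le_iff₀ h4]
          nlinarith
        exact ⟨by linarith, h8.trans (by have := hx.2; gcongr)⟩
    obtain ⟨b, hb, hxb⟩ := key
    obtain ⟨y, ⟨a, ha, rfl⟩, hy⟩ := ih (s ^ 2) (by positivity) (pow_le_one₀ hs.le hs1) hxb
    refine ⟨b + ∑ i, a i, ⟨Fin.cons b a, ?_, ?_⟩, ?_⟩
    · intro i
      refine Fin.cases ?_ (fun j => ?_) i
      · simpa using hb
      · simpa using ha j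
    · simp [Fin.sum_univ_succ]
    · rw [← pow_mul, ← pow_succ'] at hy
      rwa [← sub_sub]

theorem upper_aux (m : ℕ) : ∃ C : ℝ, 1 ≤ C ∧ ∀ s : ℝ, 0 < s → s ≤ 1 →
    volume (closedNbhd (FsumSet m) (s ^ (2 ^ m))) ≤ ENNReal.ofReal (C * s) := by
  induction m with
  | zero =>
    refine ⟨2, by norm_num, fun s hs hs1 => ?_⟩
    have : closedNbhd (FsumSet 0) (s ^ (2 ^ 0)) ⊆ Icc (-s) s := by
      rintro x ⟨y, ⟨a, ha, rfl⟩, hy⟩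
      simpa [abs_le] using hy
    refine (measure_mono this).trans ?_
    rw [Real.volume_Icc]
    exact ENNReal.ofReal_le_ofReal (by linarith)
  | succ m ih =>
    obtain ⟨C, hC, ih⟩ := ih
    refine ⟨m + 3 + 2 * C, by have : (0:ℝ) ≤ m := m.cast_nonneg; linarith, fun s hs hs1 => ?_⟩
    have h1 : 1 / s ≤ (⌈1 / s⌉₊ : ℝ) := Nat.le_ceil _
    have h2 : (⌈1 / s⌉₊ : ℝ) < 1 / s + 1 := Nat.ceil_lt_add_one (by positivity)
    generalize ⌈1 / s⌉₊ = A at *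
    set δ := s ^ (2 ^ (m + 1)) with hδ
    have hδ' : δ = (s ^ 2) ^ (2 ^ m) := by rw [hδ, ← pow_mul, ← pow_succ']
    have hδs : δ ≤ s := pow_le_of_le_one hs.le hs1 (by positivity)
    have hδ0 : 0 < δ := by positivity
    have ih' := ih (s ^ 2) (by positivity) (pow_le_one₀ hs.le hs1)
    rw [← hδ'] at ih'
    have hsub : closedNbhd (FsumSet (m + 1)) δ ⊆
        Icc (-s) ((m + 1) * s + s) ∪
        ⋃ n ∈ Finset.range A, (fun x => -(1 / ((n:ℝ) + 1)) + x) ⁻¹' closedNbhd (FsumSet m) δ := by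
      rintro x ⟨y, ⟨a, ha, rfl⟩, hy⟩
      by_cases hall : ∀ i, a i ≤ s
      · left
        have hsum : ∑ i, a i ≤ (m + 1) * s := by
          calc ∑ i, a i ≤ ∑ i : Fin (m + 1), s := Finset.sum_le_sum fun i _ => hall i
            _ = _ := by simp
        have hsum0 : 0 ≤ ∑ i, a i := Finset.sum_nonneg fun i _ => by
          rcases ha i with h | ⟨n, hn, h⟩
          · rw [h]
          · rw [h]; positivity
        rw [abs_le] at hy
        constructor <;> linarith [hy.1, hy.2]
      · right
        push Not at hall
        obtain ⟨i, hi⟩ := hall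
        rcases ha i with h | ⟨n, hn, h⟩
        · rw [h] at hi; linarith
        · have hn' : (0:ℝ) < n := by exact_mod_cast hn
          have hnA : n ≤ A := by
            have : (n:ℝ) < 1 / s := by
              rw [lt_div_iff₀ hs]
              rw [h, lt_div_iff₀ hn'] at hi
              linarith
            exact_mod_cast (this.trans_le h1).le
          simp only [mem_iUnion]
          refine ⟨n - 1, by rw [Finset.mem_range]; omega, ?_⟩
          refine ⟨∑ j, a (i.succAbove j), ⟨fun j => a (i.succAbove j), fun j => ha _, rfl⟩, ?_⟩
          have hc : (((n - 1 : ℕ) : ℝ) + 1) = n := by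
            exact_mod_cast Nat.sub_add_cancel hn
          rw [hc, ← h]
          rw [Fin.sum_univ_succAbove _ i] at hy
          convert hy using 2
          ring
    have hC0 : 0 < C := by linarith
    calc volume (closedNbhd (FsumSet (m + 1)) δ) ≤ _ := measure_mono hsub
      _ ≤ _ := measure_union_le _ _
      _ ≤ ENNReal.ofReal ((m + 3) * s) + ∑ n ∈ Finset.range A, ENNReal.ofReal (C * s ^ 2) := by
        gcongr
        · rw [Real.volume_Icc]
          exact ENNReal.ofReal_le_ofReal (by linarith)
        · refine (measure_biUnion_finset_le _ _).trans (Finset.sum_le_sum fun n _ => ?_)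
          rw [measure_preimage_add]
          exact ih'
      _ = ENNReal.ofReal ((m + 3) * s + A * (C * s ^ 2)) := by
        rw [Finset.sum_const, Finset.card_range, ENNReal.ofReal_add (by positivity) (by positivity),
          ENNReal.ofReal_mul (p := (A:ℝ)) (by positivity), ENNReal.ofReal_natCast, nsmul_eq_mul]
      _ ≤ _ := by
        apply ENNReal.ofReal_le_ofReal
        have h3 : A * s ≤ 2 := by
          have := mul_le_mul_of_nonneg_right h2.le hs.le
          rw [add_mul, div_mul_cancel₀ _ hs.ne', one_mul] at this
          linarith
        have : A * (C * s ^ 2) ≤ 2 * (C * s) := by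
          calc A * (C * s ^ 2) = (A * s) * (C * s) := by ring
            _ ≤ _ := by gcongr
        linarith

/-- The Minkowski dimension of `F_m` is `1 - 1/2^m`:
`lim_{δ → 0⁺} log λ(V_δ(F_m)) / log δ = 1/2^m`. -/
theorem minkowski_dim_Fm (m : ℕ) (hm : 0 < m) :
    Tendsto (fun δ : ℝ => Real.log (volume (closedNbhd (FsumSet m) δ)).toReal / Real.log δ)
      (nhdsWithin (0 : ℝ) (Set.Ioi 0)) (nhds ((1 : ℝ) / 2 ^ m)) := by
  obtain ⟨C, hC, hU⟩ := upper_aux m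
  have hlim : Tendsto (fun δ : ℝ => Real.log C / Real.log δ + 1 / 2 ^ m)
      (nhdsWithin (0 : ℝ) (Set.Ioi 0)) (nhds ((1 : ℝ) / 2 ^ m)) := by
    have := (Real.tendsto_log_nhdsGT_zero.const_div_atBot (Real.log C)).add_const ((1:ℝ) / 2 ^ m)
    simpa using this
  have hev : ∀ᶠ δ : ℝ in nhdsWithin (0 : ℝ) (Set.Ioi 0), δ ∈ Ioo (0:ℝ) 1 :=
    Ioo_mem_nhdsGT one_pos
  have main : ∀ δ ∈ Ioo (0:ℝ) 1,
      (1 / 2 ^ m) * Real.log δ ≤ Real.log (volume (closedNbhd (FsumSet m) δ)).toReal ∧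
      Real.log (volume (closedNbhd (FsumSet m) δ)).toReal ≤
        Real.log C + (1 / 2 ^ m) * Real.log δ := by
    intro δ hδ
    set s := δ ^ ((1:ℝ) / 2 ^ m) with hs
    have hs0 : 0 < s := Real.rpow_pos_of_pos hδ.1 _
    have hs1 : s ≤ 1 := Real.rpow_le_one hδ.1.le hδ.2.le (by positivity)
    have hsδ : s ^ (2 ^ m) = δ := by
      rw [hs, ← Real.rpow_natCast, ← Real.rpow_mul hδ.1.le]
      simp
    have hlog : Real.log s = (1 / 2 ^ m) * Real.log δ := Real.log_rpow hδ.1 _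
    have hu := hU s hs0 hs1
    have hl := measure_mono (μ := volume) (lower_aux m s hs0 hs1)
    rw [hsδ] at hu hl
    rw [Real.volume_Icc, sub_zero] at hl
    have hfin : volume (closedNbhd (FsumSet m) δ) ≠ ⊤ := ne_top_of_le_ne_top ENNReal.ofReal_ne_top hu
    have hl' := (ENNReal.ofReal_le_iff_le_toReal hfin).1 hl
    have hu' := ENNReal.toReal_le_of_le_ofReal (by positivity) hu
    rw [← hlog, ← Real.log_mul (by positivity) hs0.ne']
    exact ⟨Real.log_le_log hs0 hl', Real.log_le_log (hs0.trans_le hl') hu'⟩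
  refine tendsto_of_tendsto_of_tendsto_of_le_of_le' hlim tendsto_const_nhds ?_ ?_
  · filter_upwards [hev] with δ hδ
    have hneg := Real.log_neg hδ.1 hδ.2
    rw [le_div_iff_of_neg hneg, add_mul, div_mul_cancel₀ _ hneg.ne]
    exact (main δ hδ).2
  · filter_upwards [hev] with δ hδ
    have hneg := Real.log_neg hδ.1 hδ.2
    rw [div_le_iff_of_neg hneg]
    exact (main δ hδ).1
end

section
/- For every positive integer m, the Minkowski dimension of A_m^* equals m/(m+1); equivalently, lim_{δ→0⁺} log λ(V_δ(A_m^*)) / log δ = 1/(m+1). -/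
open MeasureTheory Filter Set

/-- One step of the Engel expansion algorithm: `x ↦ ⌈1/x⌉ · x - 1`. -/
noncomputable def engelStep (x : ℝ) : ℝ := (⌈1 / x⌉ : ℝ) * x - 1

/-- The Engel algorithm iterates: `engelIter x i = x_{i+1}`, where `x₁ = x` and
`x_{i+1} = aᵢ xᵢ - 1` with `aᵢ = ⌈1/xᵢ⌉`. -/
noncomputable def engelIter (x : ℝ) (i : ℕ) : ℝ := engelStep^[i] x

/-- The Engel fraction of `x` has length `k`: the algorithm stays positive for the
first `k` steps and terminates with `x_{k+1} = 0`. -/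
def engelLength (x : ℝ) (k : ℕ) : Prop :=
  (∀ i, i < k → 0 < engelIter x i) ∧ engelIter x k = 0

/-- `E_m^*`: the set of rationals `x ∈ (0,1]` whose Engel fraction has length `m`. -/
def EstarSet (m : ℕ) : Set ℝ :=
  {x : ℝ | (∃ q : ℚ, (q : ℝ) = x) ∧ x ∈ Set.Ioc (0 : ℝ) 1 ∧ engelLength x m}

/-- `A_m^* = ⋃_{p=1}^m E_p^*`: rationals in `(0,1]` whose Engel fraction has
length at most `m`. -/
def AstarSet (m : ℕ) : Set ℝ :=
  {x : ℝ | (∃ q : ℚ, (q : ℝ) = x) ∧ x ∈ Set.Ioc (0 : ℝ) 1 ∧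
    ∃ k, 1 ≤ k ∧ k ≤ m ∧ engelLength x k}

def BSet (n : ℕ) : Set ℝ := {x : ℝ | 0 ≤ x ∧ x ≤ 1 ∧ ∃ k, k ≤ n ∧ engelLength x k}

lemma engelLength_succ (x : ℝ) (k : ℕ) :
    engelLength x (k+1) ↔ 0 < x ∧ engelLength (engelStep x) k := by
  unfold engelLength engelIter
  constructor
  · rintro ⟨h1, h2⟩
    refine ⟨by simpa using h1 0 (by omega), fun i hi => ?_, ?_⟩
    · have := h1 (i+1) (by omega)
      simpa using this
    · simpa using h2
  · rintro ⟨h0, h1, h2⟩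
    refine ⟨fun i hi => ?_, by simpa using h2⟩
    cases i with
    | zero => simpa using h0
    | succ i => simpa using h1 i (by omega)

lemma engelLength_zero (x : ℝ) : engelLength x 0 ↔ x = 0 := by
  simp [engelLength, engelIter]

lemma BSet_zero : BSet 0 = {0} := by
  ext x
  simp only [BSet, mem_ofPred_eq, mem_singleton_iff]
  constructor
  · rintro ⟨_, _, k, hk, h⟩
    obtain rfl : k = 0 := by omega
    exact (engelLength_zero x).1 h
  · rintro rfl
    exact ⟨le_rfl, zero_le_one, 0, le_rfl, (engelLength_zero 0).2 rfl⟩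

lemma BSet_succ_cover (n N : ℕ) (hN : 1 ≤ N) (x : ℝ) (hx : x ∈ BSet (n+1)) :
    (0 ≤ x ∧ x ≤ 1 / (N:ℝ)) ∨ ∃ a ∈ Finset.Icc 1 N, (a:ℝ) * x - 1 ∈ BSet n := by
  obtain ⟨h0, h1, k, hk, hl⟩ := hx
  have hNpos : (0:ℝ) < N := by exact_mod_cast hN
  by_cases hxN : x ≤ 1 / (N:ℝ)
  · exact Or.inl ⟨h0, hxN⟩
  right
  push Not at hxN
  have hxpos : 0 < x := lt_trans (by positivity) hxN
  cases k with
  | zero => exact absurd ((engelLength_zero x).1 hl) hxpos.ne'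
  | succ k =>
    rw [engelLength_succ] at hl
    obtain ⟨_, hl⟩ := hl
    have hinv : 1 / x < N := by
      rw [div_lt_iff₀ hxpos]
      rw [div_lt_iff₀ hNpos] at hxN
      linarith
    have hcpos : 0 < ⌈1 / x⌉ := Int.ceil_pos.2 (by positivity)
    have hcle : ⌈1 / x⌉ ≤ (N:ℤ) := Int.ceil_le.2 (by exact_mod_cast hinv.le)
    obtain ⟨a, ha⟩ := Int.eq_ofNat_of_zero_le hcpos.le
    have hstep : engelStep x = (a:ℝ) * x - 1 := by
      unfold engelStep; rw [ha]; simp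
    refine ⟨a, Finset.mem_Icc.2 ⟨by omega, by omega⟩, ?_⟩
    rw [← hstep]
    have e1 : 1 / x ≤ (⌈1 / x⌉ : ℝ) := Int.le_ceil _
    have e2 : (⌈1 / x⌉ : ℝ) < 1 / x + 1 := Int.ceil_lt_add_one _
    have e3 : 1 / x * x = 1 := by field_simp
    refine ⟨?_, ?_, k, by omega, hl⟩
    · unfold engelStep; nlinarith
    · unfold engelStep; nlinarith

lemma closedNbhd_mono {A B : Set ℝ} (h : A ⊆ B) (δ : ℝ) : closedNbhd A δ ⊆ closedNbhd B δ :=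
  fun _ ⟨y, hy, hd⟩ => ⟨y, h hy, hd⟩

lemma vol_preimage (S : Set ℝ) (a : ℕ) (ha : 1 ≤ a) :
    volume ((fun x : ℝ => (a:ℝ) * x - 1) ⁻¹' S) = ENNReal.ofReal (1 / (a:ℝ)) * volume S := by
  have hpos : (0:ℝ) < a := by exact_mod_cast ha
  have : (fun x : ℝ => (a:ℝ) * x - 1) ⁻¹' S
      = (fun x => (a:ℝ) * x) ⁻¹' ((fun x => x + (-1)) ⁻¹' S) := by
    ext x; simp [sub_eq_add_neg]
  rw [this, Real.volume_preimage_mul_left hpos.ne', measure_preimage_add_right,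
    abs_of_pos (inv_pos.2 hpos), one_div]

lemma upper_bound_s7 (N : ℕ) (hN : 1 ≤ N) (H : ℝ)
    (hH : H = ∑ a ∈ Finset.Icc 1 N, 1 / (a:ℝ)) (hH1 : 1 ≤ H) (n : ℕ) :
    ∀ δ : ℝ, 0 < δ → volume (closedNbhd (BSet n) δ) ≤
      ENNReal.ofReal (n * H ^ n / N + 2 * (n + 1) * δ * N ^ n) := by
  have hN1 : (1:ℝ) ≤ N := by exact_mod_cast hN
  induction n with
  | zero =>
    intro δ hδ
    have : closedNbhd (BSet 0) δ ⊆ Icc (-δ) δ := by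
      rintro x ⟨y, hy, hd⟩
      rw [BSet_zero] at hy
      rw [mem_singleton_iff.1 hy, sub_zero] at hd
      exact abs_le.1 hd
    refine (measure_mono this).trans ?_
    rw [Real.volume_Icc]
    apply ENNReal.ofReal_le_ofReal
    simp; linarith
  | succ n ih =>
    intro δ hδ
    have hsub : closedNbhd (BSet (n+1)) δ ⊆ Icc (-δ) (1 / N + δ) ∪
        ⋃ a ∈ Finset.Icc 1 N, (fun x : ℝ => (a:ℝ) * x - 1) ⁻¹' closedNbhd (BSet n) (a * δ) := by
      rintro x ⟨y, hy, hd⟩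
      rcases BSet_succ_cover n N hN y hy with h | ⟨a, ha, h⟩
      · left
        have := abs_le.1 hd
        constructor <;> linarith [h.1, h.2]
      · right
        simp only [mem_iUnion]
        refine ⟨a, ha, (a:ℝ) * y - 1, h, ?_⟩
        have : (a:ℝ) * x - 1 - (a * y - 1) = a * (x - y) := by ring
        rw [this, abs_mul, Nat.abs_cast]
        gcongr
    refine (measure_mono hsub).trans ((measure_union_le _ _).trans ?_)
    have h2 : volume (⋃ a ∈ Finset.Icc 1 N,
          (fun x : ℝ => (a:ℝ) * x - 1) ⁻¹' closedNbhd (BSet n) (a * δ)) ≤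
        ∑ a ∈ Finset.Icc 1 N,
          ENNReal.ofReal (1 / (a:ℝ) * (n * H ^ n / N) + 2 * (n + 1) * δ * N ^ n) := by
      refine (measure_biUnion_finset_le _ _).trans (Finset.sum_le_sum fun a ha => ?_)
      have ha1 := (Finset.mem_Icc.1 ha).1
      have hapos : (0:ℝ) < a := by exact_mod_cast ha1
      rw [vol_preimage _ a ha1]
      calc _ ≤ ENNReal.ofReal (1 / (a:ℝ)) *
            ENNReal.ofReal (n * H ^ n / N + 2 * (n + 1) * (a * δ) * N ^ n) := by
              gcongr
              exact ih (a * δ) (by positivity)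
        _ = _ := by
              rw [← ENNReal.ofReal_mul (by positivity)]
              congr 1
              field_simp
    have hHn : (0:ℝ) ≤ H := by linarith
    rw [← ENNReal.ofReal_sum_of_nonneg (fun a _ => by positivity)] at h2
    rw [Real.volume_Icc]
    refine (add_le_add le_rfl h2).trans ?_
    rw [← ENNReal.ofReal_add (by have : 0 < 1 / (N:ℝ) := by positivity
                                 linarith)
      (Finset.sum_nonneg fun a _ => by positivity)]
    apply ENNReal.ofReal_le_ofReal
    rw [Finset.sum_add_distrib, ← Finset.sum_mul, ← hH]
    simp only [Finset.sum_const, Nat.card_Icc, nsmul_eq_mul]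
    push_cast
    have e1 : 1 / (N:ℝ) ≤ H ^ (n+1) / N := by
      gcongr
      exact one_le_pow₀ hH1
    have e2 : δ ≤ δ * (N:ℝ) ^ (n+1) := le_mul_of_one_le_right hδ.le (one_le_pow₀ hN1)
    have e3 : H * (n * H ^ n / N) = n * (H ^ (n+1) / N) := by ring
    have e4 : ((n:ℝ) + 1) * H ^ (n+1) / N = n * (H ^ (n+1) / N) + H ^ (n+1) / N := by ring
    rw [e3, e4]
    have e6 : (N:ℝ) * (2 * (n + 1) * δ * N ^ n) = 2 * (n+1) * (δ * N ^ (n+1)) := by ring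
    rw [e6]
    nlinarith

noncomputable def RF (N : ℕ) : ℕ → ℕ → Finset ℝ
  | 0, _ => {0}
  | n+1, i => (Finset.range N ×ˢ RF N n (i+1)).image
      (fun p => (1 + p.2) / ((i * N + p.1 : ℕ) : ℝ))

lemma RF_succ_mem {N n i : ℕ} {x : ℝ} : x ∈ RF N (n+1) i ↔
    ∃ t < N, ∃ v ∈ RF N n (i+1), x = (1 + v) / ((i * N + t : ℕ) : ℝ) := by
  simp only [RF, Finset.mem_image, Finset.mem_product, Finset.mem_range, Prod.exists]
  constructor
  · rintro ⟨t, v, ⟨h1, h2⟩, h3⟩; exact ⟨t, h1, v, h2, h3.symm⟩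
  · rintro ⟨t, h1, v, h2, h3⟩; exact ⟨t, v, ⟨h1, h2⟩, h3.symm⟩

lemma RF_bound (N : ℕ) (hN : 2 ≤ N) (n : ℕ) : ∀ i, 1 ≤ i → ∀ x ∈ RF N n i,
    0 ≤ x ∧ x ≤ 1 / ((i:ℝ) * N - 1) := by
  have hN2 : (2:ℝ) ≤ N := by exact_mod_cast hN
  induction n with
  | zero =>
    intro i hi x hx
    simp only [RF, Finset.mem_singleton] at hx
    have hi1 : (1:ℝ) ≤ i := by exact_mod_cast hi
    subst hx
    refine ⟨le_rfl, div_nonneg zero_le_one (by nlinarith)⟩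
  | succ n ih =>
    intro i hi x hx
    have hi1 : (1:ℝ) ≤ i := by exact_mod_cast hi
    obtain ⟨t, ht, v, hv, rfl⟩ := RF_succ_mem.1 hx
    obtain ⟨h0, h1⟩ := ih (i+1) (by omega) v hv
    push_cast at h1 ⊢
    have ht1 : (t:ℝ) + 1 ≤ N := by exact_mod_cast ht
    have ht0 : (0:ℝ) ≤ t := by positivity
    have hiN : (2:ℝ) ≤ i * N := by nlinarith
    refine ⟨by positivity, ?_⟩
    have hv1 : v ≤ 1 / (i * N + t) := h1.trans (by
      apply one_div_le_one_div_of_le <;> linarith)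
    set b : ℝ := i * N + t with hb
    have hb2 : 2 ≤ b := by linarith
    calc (1 + v) / b ≤ 1 / (b - 1) := by
          rw [le_div_iff₀ (by linarith), div_mul_eq_mul_div, div_le_one (by linarith)]
          rw [le_div_iff₀ (by linarith)] at hv1
          nlinarith
      _ ≤ _ := by apply one_div_le_one_div_of_le <;> linarith

/-- digits bound for tails -/
lemma RF_tail (N : ℕ) (hN : 2 ≤ N) (n i t : ℕ) (hi : 1 ≤ i) (ht : t < N) (v : ℝ)
    (hv : v ∈ RF N n (i+1)) : 2 ≤ i * N + t ∧ 0 ≤ v ∧ v * ((i * N + t : ℕ) : ℝ) ≤ 1 := by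
  obtain ⟨h0, h1⟩ := RF_bound N hN n (i+1) (by omega) v hv
  have h2 : 2 ≤ i * N + t := by nlinarith
  refine ⟨h2, h0, ?_⟩
  have h3 : ((i * N + t : ℕ):ℝ) ≤ ((i+1 : ℕ):ℝ) * N - 1 := by
    have : i * N + t + 1 ≤ (i+1) * N := by nlinarith
    have : ((i * N + t + 1 : ℕ):ℝ) ≤ (((i+1) * N : ℕ):ℝ) := by exact_mod_cast this
    push_cast at this ⊢
    linarith
  have h4 : (2:ℝ) ≤ ((i * N + t : ℕ):ℝ) := by exact_mod_cast h2
  rw [le_div_iff₀ (by linarith)] at h1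
  nlinarith

lemma engelStep_of (a : ℕ) (ha : 2 ≤ a) (v : ℝ) (h0 : 0 ≤ v) (h1 : v * (a:ℝ) ≤ 1) :
    engelStep ((1 + v) / a) = v := by
  have ha2 : (2:ℝ) ≤ a := by exact_mod_cast ha
  have hc : ⌈1 / ((1 + v) / (a:ℝ))⌉ = (a:ℤ) := by
    rw [Int.ceil_eq_iff, one_div_div]
    push_cast
    constructor
    · rw [lt_div_iff₀ (by linarith)]
      by_cases hv : v = 0
      · subst hv; linarith
      · have : 0 < v := lt_of_le_of_ne h0 (Ne.symm hv)
        nlinarith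
    · rw [div_le_iff₀ (by linarith)]; nlinarith
  unfold engelStep
  rw [hc]
  push_cast
  field_simp
  ring

lemma RF_engel (N : ℕ) (hN : 2 ≤ N) (n : ℕ) : ∀ i, 1 ≤ i → ∀ x ∈ RF N n i,
    (∃ q : ℚ, (q:ℝ) = x) ∧ engelLength x n := by
  induction n with
  | zero =>
    intro i hi x hx
    simp only [RF, Finset.mem_singleton] at hx
    exact ⟨⟨0, by simp [hx]⟩, (engelLength_zero x).2 hx⟩
  | succ n ih =>
    intro i hi x hx
    obtain ⟨t, ht, v, hv, rfl⟩ := RF_succ_mem.1 hx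
    obtain ⟨h2, h0, h1⟩ := RF_tail N hN n i t hi ht v hv
    obtain ⟨⟨q, hq⟩, hl⟩ := ih (i+1) (by omega) v hv
    refine ⟨⟨(1 + q) / ((i * N + t : ℕ) : ℚ), by push_cast; rw [hq]⟩, ?_⟩
    rw [engelLength_succ, engelStep_of _ h2 v h0 h1]
    have : (0:ℝ) < ((i * N + t : ℕ):ℝ) := by exact_mod_cast (by omega : 0 < i * N + t)
    exact ⟨by positivity, hl⟩

lemma RF_lower (N : ℕ) (hN : 2 ≤ N) (M n i : ℕ) (hi : 1 ≤ i) (hM : (i + 1) * N ≤ M) :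
    ∀ x ∈ RF N (n+1) i, 1 / (M:ℝ) ≤ x := by
  intro x hx
  obtain ⟨t, ht, v, hv, rfl⟩ := RF_succ_mem.1 hx
  obtain ⟨h2, h0, h1⟩ := RF_tail N hN n i t hi ht v hv
  have h3 : i * N + t ≤ M := by nlinarith
  have h3' : ((i * N + t : ℕ):ℝ) ≤ M := by exact_mod_cast h3
  have h4 : (0:ℝ) < ((i * N + t : ℕ):ℝ) := by exact_mod_cast (by omega : 0 < i * N + t)
  gcongr
  linarith

lemma sep_digit (a b : ℕ) (ha : 2 ≤ a) (hab : a < b) (v w : ℝ) (hw : w * (b:ℝ) ≤ 1) :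
    v / a < (1 + v) / a - (1 + w) / b := by
  have ha2 : (2:ℝ) ≤ a := by exact_mod_cast ha
  have hab' : (a:ℝ) + 1 ≤ b := by exact_mod_cast hab
  rw [add_div 1 v]
  have : (1 + w) / (b:ℝ) < 1 / a := by
    rw [div_lt_div_iff₀ (by linarith) (by linarith)]
    have : w * a < 1 := by
      by_cases hw0 : w ≤ 0
      · nlinarith
      · push Not at hw0; nlinarith
    nlinarith
  linarith

lemma RF_sep_aux (N : ℕ) (hN : 2 ≤ N) (M n i : ℕ) (hi : 1 ≤ i) (hM : (i + (n+1)) * N ≤ M)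
    (t s : ℕ) (ht : t < N) (hs : s < N) (hts : t < s) (v w : ℝ)
    (hv : v ∈ RF N n (i+1)) (hw : w ∈ RF N n (i+1)) :
    1 / (M:ℝ) ^ (n+2) ≤ (1 + v) / ((i * N + t : ℕ) : ℝ) - (1 + w) / ((i * N + s : ℕ) : ℝ) := by
  obtain ⟨h2, h0, h1⟩ := RF_tail N hN n i t hi ht v hv
  obtain ⟨g2, g0, g1⟩ := RF_tail N hN n i s hi hs w hw
  have hab : i * N + t < i * N + s := by omega
  have hbM : i * N + s ≤ M := by nlinarith
  have hsep := sep_digit _ _ h2 hab v w g1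
  generalize i * N + t = a at *
  generalize i * N + s = b at *
  have ha2 : (2:ℝ) ≤ a := by exact_mod_cast h2
  have hab' : (a:ℝ) + 1 ≤ b := by exact_mod_cast hab
  have hbM' : (b:ℝ) ≤ M := by exact_mod_cast hbM
  have hM1 : (1:ℝ) ≤ M := by linarith
  have hpow : 1 / (M:ℝ) ^ (n+2) ≤ 1 / (M:ℝ) ^ 2 := by
    apply one_div_le_one_div_of_le (by positivity)
    exact pow_le_pow_right₀ hM1 (by omega)
  refine hpow.trans ?_
  cases n with
  | zero =>
    simp only [RF, Finset.mem_singleton] at hv hw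
    subst hv; subst hw
    have : (1 + 0) / (a:ℝ) - (1 + 0) / b = (b - a) / (a * b) := by
      field_simp
      ring
    rw [this]
    have e : (a:ℝ) * b ≤ M ^ 2 := by nlinarith
    have e0 : (0:ℝ) < a * b := by nlinarith
    have e1 : (1:ℝ) ≤ b - a := by linarith
    gcongr
  | succ n =>
    have hl := RF_lower N hN M n (i+1) (by omega) (by nlinarith) v hv
    have : 1 / (M:ℝ) ^ 2 ≤ v / a := by
      calc 1 / (M:ℝ) ^ 2 = (1 / M) / M := by field_simp
        _ ≤ v / a := by
          gcongr
          linarith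
    linarith

lemma RF_sep (N : ℕ) (hN : 2 ≤ N) (M : ℕ) (n : ℕ) : ∀ i, 1 ≤ i → (i + n) * N ≤ M →
    ∀ x ∈ RF N n i, ∀ y ∈ RF N n i, x ≠ y → 1 / (M:ℝ) ^ (n+1) ≤ |x - y| := by
  induction n with
  | zero =>
    intro i hi hM x hx y hy hxy
    simp only [RF, Finset.mem_singleton] at hx hy
    exact absurd (hx.trans hy.symm) hxy
  | succ n ih =>
    intro i hi hM x hx y hy hxy
    obtain ⟨t, ht, v, hv, rfl⟩ := RF_succ_mem.1 hx
    obtain ⟨s, hs, w, hw, rfl⟩ := RF_succ_mem.1 hy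
    rcases lt_trichotomy t s with h | h | h
    · exact (RF_sep_aux N hN M n i hi hM t s ht hs h v w hv hw).trans (le_abs_self _)
    · subst h
      have hvw : v ≠ w := fun h => hxy (by rw [h])
      have := ih (i+1) (by omega) (by nlinarith) v hv w hw hvw
      obtain ⟨h2, h0, h1⟩ := RF_tail N hN n i t hi ht v hv
      have h3 : i * N + t ≤ M := by nlinarith
      generalize i * N + t = a at *
      have ha2 : (2:ℝ) ≤ a := by exact_mod_cast h2
      have haM : (a:ℝ) ≤ M := by exact_mod_cast h3
      have e : (1 + v) / (a:ℝ) - (1 + w) / a = (v - w) / a := by ring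
      rw [e, abs_div, Nat.abs_cast]
      calc 1 / (M:ℝ) ^ (n+1+1) = (1 / (M:ℝ) ^ (n+1)) / M := by rw [pow_succ _ (n+1), div_div]
        _ ≤ |v - w| / a := by gcongr
    · rw [abs_sub_comm]
      exact (RF_sep_aux N hN M n i hi hM s t hs ht h w v hw hv).trans (le_abs_self _)

lemma RF_card (N : ℕ) (hN : 2 ≤ N) (n : ℕ) : ∀ i, 1 ≤ i → (RF N n i).card = N ^ n := by
  induction n with
  | zero => intro i hi; simp [RF]
  | succ n ih =>
    intro i hi
    rw [RF, Finset.card_image_of_injOn, Finset.card_product, ih (i+1) (by omega)]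
    · simp [pow_succ, mul_comm]
    · rintro ⟨t, v⟩ hp ⟨s, w⟩ hq heq
      simp only [Finset.coe_product, mem_prod, Finset.mem_coe, Finset.mem_range] at hp hq heq
      have hMpos : (0:ℝ) < 1 / (((i + (n+1)) * N : ℕ):ℝ) ^ (n+2) := by
        have : 0 < (i + (n+1)) * N := by positivity
        have : (0:ℝ) < (((i + (n+1)) * N : ℕ):ℝ) := by exact_mod_cast this
        positivity
      rcases lt_trichotomy t s with h | h | h
      · have := RF_sep_aux N hN _ n i hi le_rfl t s hp.1 hq.1 h v w hp.2 hq.2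
        linarith
      · subst h
        obtain ⟨h2, h0, h1⟩ := RF_tail N hN n i t hi hp.1 v hp.2
        have h4 : (0:ℝ) < ((i * N + t : ℕ):ℝ) := by exact_mod_cast (by omega : 0 < i * N + t)
        rw [div_left_inj' h4.ne'] at heq
        have : v = w := by linarith
        rw [this]
      · have := RF_sep_aux N hN _ n i hi le_rfl s t hq.1 hp.1 h w v hq.2 hp.2
        linarith

lemma RF_subset (N : ℕ) (hN : 2 ≤ N) (m : ℕ) (hm : 0 < m) : ∀ x ∈ RF N m 1, x ∈ AstarSet m := by
  intro x hx
  obtain ⟨hq, hl⟩ := RF_engel N hN m 1 le_rfl x hx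
  obtain ⟨h0, h1⟩ := RF_bound N hN m 1 le_rfl x hx
  refine ⟨hq, ⟨?_, ?_⟩, m, hm, le_rfl, hl⟩
  · simpa [engelIter] using hl.1 0 hm
  · refine h1.trans ?_
    have hN2 : (2:ℝ) ≤ N := by exact_mod_cast hN
    rw [div_le_one] <;> push_cast <;> linarith

lemma lower_bound_s7 (N : ℕ) (hN : 2 ≤ N) (m : ℕ) (hm : 0 < m) (δ : ℝ) (hδ : 0 < δ)
    (h : 2 * δ < 1 / (((1 + m) * N : ℕ):ℝ) ^ (m+1)) :
    ENNReal.ofReal ((N:ℝ) ^ m * (2 * δ)) ≤ volume (closedNbhd (AstarSet m) δ) := by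
  have hsub : (⋃ v ∈ RF N m 1, Icc (v - δ) (v + δ)) ⊆ closedNbhd (AstarSet m) δ := by
    intro x hx
    simp only [mem_iUnion] at hx
    obtain ⟨v, hv, hx⟩ := hx
    refine ⟨v, RF_subset N hN m hm v hv, abs_le.2 ⟨?_, ?_⟩⟩ <;> linarith [hx.1, hx.2]
  refine le_trans (le_of_eq ?_) (measure_mono hsub)
  rw [measure_biUnion_finset]
  · have e : ∀ x ∈ RF N m 1, volume (Icc (x - δ) (x + δ)) = ENNReal.ofReal (2 * δ) := by
      intro x _
      rw [Real.volume_Icc]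
      congr 1; ring
    rw [Finset.sum_congr rfl e, Finset.sum_const, RF_card N hN m 1 le_rfl]
    rw [ENNReal.ofReal_mul (by positivity), nsmul_eq_mul]
    congr 1
    rw [← Nat.cast_pow, ENNReal.ofReal_natCast]
  · intro x hx y hy hxy
    have := RF_sep N hN ((1+m)*N) m 1 le_rfl le_rfl x hx y hy hxy
    rw [Function.onFun, Set.disjoint_left]
    intro z hz1 hz2
    have : |x - y| ≤ 2 * δ := abs_le.2 ⟨by linarith [hz1.1, hz1.2, hz2.1, hz2.2],
      by linarith [hz1.1, hz1.2, hz2.1, hz2.2]⟩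
    linarith
  · intro x _; exact measurableSet_Icc

lemma Astar_sub_B (m : ℕ) : AstarSet m ⊆ BSet m := by
  rintro x ⟨_, hx, k, _, hk, hl⟩
  exact ⟨hx.1.le, hx.2, k, hk, hl⟩

/-- bounds in terms of `T` with `δ T^(m+1) = 1`. -/
lemma upper_T (m : ℕ) (T δ : ℝ) (hT : 1 ≤ T) (hδ : 0 < δ) (h : δ * T ^ (m+1) = 1) :
    volume (closedNbhd (AstarSet m) δ) ≤
      ENNReal.ofReal ((m + 2 * (m+1) * 2 ^ m) * (2 + Real.log T) ^ m / T) := by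
  set N := ⌈T⌉₊ with hNdef
  have hTN : T ≤ N := Nat.le_ceil T
  have hN2 : (N:ℝ) ≤ 2 * T := by linarith [Nat.ceil_lt_add_one (by linarith : 0 ≤ T)]
  have hN : 1 ≤ N := Nat.one_le_ceil_iff.2 (by linarith)
  set H : ℝ := ∑ a ∈ Finset.Icc 1 N, 1 / (a:ℝ) with hH
  have hH1 : 1 ≤ H := by
    have := Finset.single_le_sum (f := fun a : ℕ => 1 / (a:ℝ)) (fun a _ => by positivity)
      (Finset.mem_Icc.2 ⟨le_rfl, hN⟩)
    simpa [hH] using this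
  have hHl : H ≤ 2 + Real.log T := by
    have h1 := harmonic_le_one_add_log N
    have h2 : ((harmonic N : ℚ) : ℝ) = H := by
      rw [harmonic_eq_sum_Icc, hH]; push_cast; simp
    have h3 : Real.log N ≤ Real.log (2 * T) := Real.log_le_log (by linarith) hN2
    rw [Real.log_mul (by norm_num) (by linarith)] at h3
    have h4 : Real.log 2 ≤ 1 := by linarith [Real.log_two_lt_d9]
    linarith
  refine (measure_mono (closedNbhd_mono (Astar_sub_B m) δ)).trans
    ((upper_bound_s7 N hN H hH hH1 m δ hδ).trans (ENNReal.ofReal_le_ofReal ?_))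
  have hlogT : 0 ≤ Real.log T := Real.log_nonneg hT
  have hδT : δ * T ^ m = 1 / T := by
    rw [eq_div_iff (by linarith)]; rw [← h]; ring
  have e1 : m * H ^ m / N ≤ m * (2 + Real.log T) ^ m / T := by gcongr
  have e2 : 2 * (m + 1) * δ * (N:ℝ) ^ m ≤ 2 * (m+1) * 2 ^ m * (1 / T) := by
    calc 2 * (m + 1) * δ * (N:ℝ) ^ m ≤ 2 * (m + 1) * δ * (2 * T) ^ m := by gcongr
      _ = 2 * (m+1) * 2 ^ m * (δ * T ^ m) := by rw [mul_pow]; ring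
      _ = _ := by rw [hδT]
  have e3 : 2 * (m+1) * 2 ^ m * (1 / T) ≤ 2 * (m+1) * 2 ^ m * ((2 + Real.log T) ^ m / T) := by
    gcongr
    exact one_le_pow₀ (by linarith)
  calc _ ≤ _ := add_le_add e1 (e2.trans e3)
    _ = _ := by ring

lemma lower_T (m : ℕ) (hm : 0 < m) (T δ : ℝ) (hT : 8 * (m+1) ≤ T) (hδ : 0 < δ)
    (h : δ * T ^ (m+1) = 1) :
    ENNReal.ofReal (2 / (8 * (m+1)) ^ m / T) ≤ volume (closedNbhd (AstarSet m) δ) := by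
  set N := ⌊T / (4 * (m+1))⌋₊ with hNdef
  have hm1 : (0:ℝ) < m + 1 := by positivity
  have hTpos : 0 < T := lt_of_lt_of_le (by positivity) hT
  have hx2 : 2 ≤ T / (4 * (m+1)) := by rw [le_div_iff₀ (by positivity)]; linarith
  have hN : 2 ≤ N := Nat.le_floor (by exact_mod_cast hx2)
  have hNle : (N:ℝ) ≤ T / (4 * (m+1)) := Nat.floor_le (by positivity)
  have hNge : T / (8 * (m+1)) ≤ N := by
    have := Nat.lt_floor_add_one (T / (4 * (m+1)))
    have e : T / (8 * (m+1)) = T / (4 * (m+1)) / 2 := by field_simp; norm_num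
    rw [e]; linarith
  have hNpos : (0:ℝ) < N := by exact_mod_cast (by omega : 0 < N)
  refine le_trans (ENNReal.ofReal_le_ofReal ?_) (lower_bound_s7 N hN m hm δ hδ ?_)
  · have hδT : δ * T ^ m = 1 / T := by
      rw [eq_div_iff (by linarith)]; rw [← h]; ring
    calc 2 / (8 * ((m:ℝ)+1)) ^ m / T = 2 / (8 * ((m:ℝ)+1)) ^ m * (1 / T) := by ring
      _ = (T / (8 * (m+1))) ^ m * (2 * δ) := by rw [← hδT, div_pow]; ring
      _ ≤ _ := by gcongr
  · have e1 : (((1 + m) * N : ℕ):ℝ) ≤ T / 4 := by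
      push_cast
      rw [le_div_iff₀ (by positivity)] at hNle
      linarith
    have e0 : (0:ℝ) < (((1 + m) * N : ℕ):ℝ) := by push_cast; positivity
    rw [lt_div_iff₀ (by positivity)]
    calc 2 * δ * (((1 + m) * N : ℕ):ℝ) ^ (m+1) ≤ 2 * δ * (T / 4) ^ (m+1) := by gcongr
      _ = 2 * (δ * T ^ (m+1)) / 4 ^ (m+1) := by rw [div_pow]; ring
      _ = 2 / 4 ^ (m+1) := by rw [h, mul_one]
      _ < 1 := by
        rw [div_lt_one (by positivity)]
        calc (2:ℝ) < 4 ^ 1 := by norm_num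
          _ ≤ 4 ^ (m+1) := pow_le_pow_right₀ (by norm_num) (by omega)

/-- The Minkowski dimension of `A_m^*` is `m/(m+1)`:
`lim_{δ → 0⁺} log λ(V_δ(A_m^*)) / log δ = 1/(m+1)`. -/
theorem minkowski_dim_Astar (m : ℕ) (hm : 0 < m) :
    Tendsto (fun δ : ℝ => Real.log (volume (closedNbhd (AstarSet m) δ)).toReal / Real.log δ)
      (nhdsWithin (0 : ℝ) (Set.Ioi 0)) (nhds ((1 : ℝ) / (m + 1))) := by
  set p : ℝ := 1 / ((m:ℝ) + 1) with hp
  have hm1 : (0:ℝ) < (m:ℝ) + 1 := by positivity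
  have hppos : 0 < p := by positivity
  have hp1 : p ≤ 1 := by
    rw [hp, div_le_one hm1]
    have : (0:ℝ) ≤ m := by positivity
    linarith
  set C : ℝ := (m + 2 * (m+1) * 2 ^ m) with hC
  set c : ℝ := 2 / (8 * (m+1)) ^ m with hc
  have hCpos : 0 < C := by positivity
  have hcpos : 0 < c := by positivity
  have hlog : Tendsto Real.log (nhdsWithin (0 : ℝ) (Set.Ioi 0)) atBot :=
    Real.tendsto_log_nhdsGT_zero
  have hL : Tendsto (fun δ : ℝ => - Real.log δ) (nhdsWithin (0 : ℝ) (Set.Ioi 0)) atTop :=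
    tendsto_neg_atBot_atTop.comp hlog
  have hev : ∀ᶠ δ in nhdsWithin (0:ℝ) (Set.Ioi 0),
      0 < δ ∧ Real.log δ < 0 ∧
      Real.log c - p * (-Real.log δ) ≤ Real.log (volume (closedNbhd (AstarSet m) δ)).toReal ∧
      Real.log (volume (closedNbhd (AstarSet m) δ)).toReal ≤
        Real.log C + m * Real.log (2 + -Real.log δ) - p * (-Real.log δ) := by
    filter_upwards [self_mem_nhdsWithin, hlog.eventually_lt_atBot 0,
      hL.eventually_ge_atTop (Real.log (8 * (m+1)) / p)] with δ hδ hl0 hbig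
    have hδ' : 0 < δ := hδ
    set T : ℝ := Real.exp (p * (-Real.log δ)) with hTdef
    have hlT : Real.log T = p * (-Real.log δ) := Real.log_exp _
    have hTpos : 0 < T := Real.exp_pos _
    have hT8 : 8 * ((m:ℝ)+1) ≤ T := by
      rw [← Real.log_le_log_iff (by positivity) hTpos, hlT]
      rw [div_le_iff₀ hppos] at hbig
      linarith
    have hT1 : 1 ≤ T := by
      have : (0:ℝ) ≤ m := by positivity
      linarith
    have hδT : δ * T ^ (m+1) = 1 := by
      rw [hTdef, ← Real.exp_nat_mul]
      have : ((m+1 : ℕ):ℝ) * (p * -Real.log δ) = - Real.log δ := by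
        rw [hp]; push_cast; field_simp
      rw [this, Real.exp_neg, Real.exp_log hδ']
      field_simp
    have hU := upper_T m T δ hT1 hδ' hδT
    have hLo := lower_T m hm T δ hT8 hδ' hδT
    have hlogT0 : 0 ≤ Real.log T := Real.log_nonneg hT1
    have hfin : volume (closedNbhd (AstarSet m) δ) ≠ ⊤ :=
      ne_top_of_le_ne_top ENNReal.ofReal_ne_top hU
    have hU' : (volume (closedNbhd (AstarSet m) δ)).toReal ≤ C * (2 + Real.log T) ^ m / T :=
      ENNReal.toReal_le_of_le_ofReal (by positivity) hU
    have hLo' : c / T ≤ (volume (closedNbhd (AstarSet m) δ)).toReal :=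
      (ENNReal.ofReal_le_iff_le_toReal hfin).1 hLo
    have hcT : 0 < c / T := by positivity
    refine ⟨hδ', hl0, ?_, ?_⟩
    · have := Real.log_le_log hcT hLo'
      rwa [Real.log_div hcpos.ne' hTpos.ne', hlT] at this
    · have := Real.log_le_log (lt_of_lt_of_le hcT hLo') hU'
      rw [Real.log_div (by positivity) hTpos.ne', Real.log_mul hCpos.ne' (by positivity),
        Real.log_pow] at this
      have h2 : Real.log (2 + Real.log T) ≤ Real.log (2 + -Real.log δ) := by
        apply Real.log_le_log (by positivity)
        rw [hlT]
        nlinarith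
      have h3 : (m:ℝ) * Real.log (2 + Real.log T) ≤ m * Real.log (2 + -Real.log δ) := by gcongr
      linarith
  have hinv : Tendsto (fun δ : ℝ => (- Real.log δ)⁻¹) (nhdsWithin (0 : ℝ) (Set.Ioi 0)) (nhds 0) :=
    tendsto_inv_atTop_zero.comp hL
  have hll : Tendsto (fun s : ℝ => Real.log (2 + s) / s) atTop (nhds 0) := by
    have h1 : Tendsto (fun s : ℝ => Real.log (2 + s) / (1 * (2 + s) + (-2))) atTop (nhds 0) := by
      have := (Real.tendsto_pow_log_div_mul_add_atTop 1 (-2) 1 one_ne_zero).comp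
        (tendsto_atTop_add_const_left atTop (2:ℝ) tendsto_id)
      simpa [Function.comp_def] using this
    refine h1.congr fun s => ?_
    congr 1; ring
  have hllδ : Tendsto (fun δ : ℝ => Real.log (2 + -Real.log δ) / (-Real.log δ))
      (nhdsWithin (0 : ℝ) (Set.Ioi 0)) (nhds 0) := hll.comp hL
  have hup : Tendsto (fun δ : ℝ => p - Real.log c * (-Real.log δ)⁻¹)
      (nhdsWithin (0 : ℝ) (Set.Ioi 0)) (nhds p) := by
    simpa using (hinv.const_mul (Real.log c)).const_sub p
  have hlo : Tendsto (fun δ : ℝ => p - Real.log C * (-Real.log δ)⁻¹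
      - m * (Real.log (2 + -Real.log δ) / (-Real.log δ)))
      (nhdsWithin (0 : ℝ) (Set.Ioi 0)) (nhds p) := by
    simpa using ((hinv.const_mul (Real.log C)).const_sub p).sub (hllδ.const_mul (m:ℝ))
  refine tendsto_of_tendsto_of_tendsto_of_le_of_le' hlo hup ?_ ?_
  · filter_upwards [hev] with δ ⟨_, hl0, _, h2⟩
    rw [le_div_iff_of_neg hl0]
    refine h2.trans (le_of_eq ?_)
    have := hl0.ne
    field_simp
    ring
  · filter_upwards [hev] with δ ⟨_, hl0, h1, _⟩
    rw [div_le_iff_of_neg hl0]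
    refine le_trans (le_of_eq ?_) h1
    have := hl0.ne
    field_simp
    ring
end

section
/- Let m, n be positive integers. Then for every real number x ∈ (0, 1/n), there exists y ∈ E_m such that |x − y| ≤ n^{−2^m}. -/
open Set


/-- The greedy process with `a = ⌊1/x⌋ + 1`, which always leaves a positive remainder. -/
theorem greedy_aux (m : ℕ) : ∀ (n : ℕ) (x : ℝ), 0 < n → 0 < x → x * n ≤ 1 →
    ∃ a : ℕ → ℕ, (∀ i, i < m → n + 1 ≤ a i) ∧
      (∀ i j, i < j → j < m → a i < a j) ∧
      (∑ i ∈ Finset.range m, (1 : ℝ) / (a i : ℝ)) < x ∧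
      x - (∑ i ∈ Finset.range m, (1 : ℝ) / (a i : ℝ)) ≤ ((n : ℝ) ^ (2 ^ m))⁻¹ ∧
      ∀ l, l < m → ((a l : ℝ) - 1) * (x - ∑ i ∈ Finset.range l, (1 : ℝ) / (a i : ℝ)) ≤ 1 := by
  induction m with
  | zero =>
    intro n x hn hx hxn
    refine ⟨fun _ => 0, by simp, by simp, by simpa using hx, ?_, by simp⟩
    have hn' : (0 : ℝ) < n := by exact_mod_cast hn
    simp only [Finset.range_zero, Finset.sum_empty, sub_zero, pow_zero, pow_one]
    rw [← one_div, le_div_iff₀ hn']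
    exact hxn
  | succ m ih =>
    intro n x hn hx hxn
    obtain ⟨k, hk⟩ : ∃ k, k = ⌊1 / x⌋₊ := ⟨_, rfl⟩
    have hnk : n ≤ k := by
      rw [hk]
      apply Nat.le_floor
      rw [le_div_iff₀ hx]
      linarith
    have hk1 : (k : ℝ) * x ≤ 1 := by
      have := Nat.floor_le (show 0 ≤ 1 / x by positivity)
      rw [← hk, le_div_iff₀ hx] at this
      exact this
    have hk2 : 1 < ((k : ℝ) + 1) * x := by
      have := Nat.lt_floor_add_one (1 / x)
      rw [← hk, div_lt_iff₀ hx] at this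
      exact this
    have hk0 : 0 < k := by omega
    have hkR : (0 : ℝ) < k := by exact_mod_cast hk0
    have hc : ((k : ℝ) + 1) * (1 / ((k : ℝ) + 1)) = 1 := by field_simp
    have hnn : n ^ 2 ≤ k * (k + 1) := by nlinarith
    obtain ⟨a, h1, h2, h3, h4, h5⟩ := ih (k * (k + 1)) (x - 1 / ((k : ℝ) + 1)) (by positivity)
      (by
        rw [sub_pos, div_lt_iff₀ (by positivity)]
        linarith)
      (by
        push_cast
        have : (x - 1 / ((k : ℝ) + 1)) * (k * (k + 1)) = (k * x) * (k + 1) - k := by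
          field_simp
        rw [this]
        nlinarith)
    refine ⟨fun i => Nat.casesOn i (k + 1) a, ?_, ?_, ?_, ?_, ?_⟩
    · rintro (_ | i) hi
      · simpa using hnk
      · have := h1 i (by omega)
        show n + 1 ≤ a i
        nlinarith
    · rintro (_ | i) (_ | j) hij hj
      · omega
      · have := h1 j (by omega)
        show k + 1 < a j
        nlinarith
      · omega
      · exact h2 i j (by omega) (by omega)
    · rw [Finset.sum_range_succ']
      have h0 : (((Nat.rec (k + 1) (fun n _ => a n) 0 : ℕ)) : ℝ) = (k : ℝ) + 1 := by
        simp
      push_cast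
      rw [h0]
      linarith
    · rw [Finset.sum_range_succ']
      have h0 : (((Nat.rec (k + 1) (fun n _ => a n) 0 : ℕ)) : ℝ) = (k : ℝ) + 1 := by
        simp
      have hle : (((k * (k + 1) : ℕ) : ℝ) ^ (2 ^ m))⁻¹ ≤ ((n : ℝ) ^ (2 ^ (m + 1)))⁻¹ := by
        have hn' : (0 : ℝ) < n := by exact_mod_cast hn
        apply inv_anti₀ (by positivity)
        rw [pow_succ' 2 m, pow_mul]
        apply pow_le_pow_left₀ (by positivity)
        exact_mod_cast hnn
      push_cast at *
      rw [h0]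
      linarith
    · rintro (_ | l) hl
      · simpa using hk1
      · have := h5 l (by omega)
        rw [Finset.sum_range_succ']
        have h0 : (((Nat.rec (k + 1) (fun n _ => a n) 0 : ℕ)) : ℝ) = (k : ℝ) + 1 := by
          simp
        push_cast
        have e : ∀ s : ℝ, x - (s + 1 / ((k : ℝ) + 1)) = x - 1 / ((k : ℝ) + 1) - s := by
          intro s
          ring
        rw [h0, e]
        exact this

/-- For `m, n ≥ 1` and every `x ∈ (0, 1/n)`, there exists `y ∈ E_m` with
`|x - y| ≤ n^{-2^m}`. -/
theorem egyptian_density (m n : ℕ) (hm : 0 < m) (hn : 0 < n)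
    (x : ℝ) (hx : x ∈ Set.Ioo (0 : ℝ) (1 / (n : ℝ))) :
    ∃ y ∈ Eset m, |x - y| ≤ ((n : ℝ) ^ (2 ^ m))⁻¹ := by
  obtain ⟨hx0, hx1⟩ := hx
  have hn' : (1 : ℝ) ≤ n := by exact_mod_cast hn
  rw [lt_div_iff₀ (by positivity)] at hx1
  obtain ⟨a, h1, h2, h3, h4, h5⟩ := greedy_aux m n x hn hx0 hx1.le
  refine ⟨∑ i ∈ Finset.range m, (1 : ℝ) / (a i : ℝ), ⟨⟨?_, ?_⟩, a, ?_, h2, rfl, ?_⟩, ?_⟩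
  · apply Finset.sum_pos
    · intro i hi
      have := h1 i (Finset.mem_range.1 hi)
      have : (0 : ℝ) < a i := by exact_mod_cast (by omega : 0 < a i)
      positivity
    · exact ⟨0, Finset.mem_range.2 hm⟩
  · nlinarith
  · intro i hi
    have := h1 i hi
    omega
  · intro l hl
    refine ⟨?_, ?_⟩
    · apply Finset.sum_le_sum_of_subset_of_nonneg
      · intro i hi
        simp only [Finset.mem_range] at *
        omega
      · intros
        positivity
    · have hl1 : (1 : ℝ) < a l := by
        have := h1 l hl
        exact_mod_cast (by omega : 1 < a l)
      refine lt_of_lt_of_le ?_ (h5 l hl)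
      apply mul_lt_mul_of_pos_left _ (by linarith)
      linarith
  · rw [abs_of_pos (by linarith)]
    exact h4
end

section
/- For all positive integers n and m, F_m ⊆ ⋃_{k=0}^m ⋃_{a ∈ G_{k,n}} [ξ(a), ξ(a) + m·n^{−2^k}]. -/
open Set

/-- `G_{k,n}`: the set of nondecreasing `k`-tuples of positive integers with
`a i ≤ n^(2^i)` for every `i` (0-indexed); `G_{0,n}` contains only the empty word. -/
def Gset (k n : ℕ) : Set (Fin k → ℕ) :=
  {a | (∀ i, 1 ≤ a i) ∧ Monotone a ∧ ∀ i : Fin k, a i ≤ n ^ 2 ^ (i : ℕ)}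

/-- `ξ(a) = Σᵢ 1/aᵢ`. -/
noncomputable def xiVal {k : ℕ} (a : Fin k → ℕ) : ℝ := ∑ i, (1 : ℝ) / (a i : ℝ)

/-- For all `n, m ≥ 1`,
`F_m ⊆ ⋃_{k=0}^m ⋃_{a ∈ G_{k,n}} [ξ(a), ξ(a) + m·n^{-2^k}]`. -/
theorem Fm_subset_union_intervals (n m : ℕ) (hn : 0 < n) (hm : 0 < m) :
    FsumSet m ⊆
      ⋃ (k : ℕ) (_ : k ≤ m) (a : Fin k → ℕ) (_ : a ∈ Gset k n),
        Set.Icc (xiVal a) (xiVal a + (m : ℝ) * ((n : ℝ) ^ 2 ^ k)⁻¹) := by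
  rintro x ⟨a, ha, rfl⟩
  obtain ⟨σ, hσ⟩ : ∃ σ : Equiv.Perm (Fin m), Antitone (a ∘ σ) := by
    refine ⟨Tuple.sort (fun i => - a i), fun i j hij => ?_⟩
    have := Tuple.monotone_sort (fun i => - a i) hij
    simpa using this
  have hF0 : ∀ y ∈ Fset, 0 ≤ y := by
    rintro y (hy | ⟨p, hp, rfl⟩)
    · exact (Set.mem_singleton_iff.1 hy).ge
    · positivity
  let g : ℕ → ℝ := fun i => if h : i < m then a (σ ⟨i, h⟩) else 0
  have hgF : ∀ i, g i ∈ Fset := by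
    intro i
    by_cases h : i < m
    · simp only [g, h, dif_pos]; exact ha _
    · simp only [g, h, dif_neg, not_false_eq_true]; exact Or.inl rfl
  have hg0 : ∀ i, 0 ≤ g i := fun i => hF0 _ (hgF i)
  have hganti : Antitone g := by
    intro i j hij
    by_cases h : j < m
    · have hi : i < m := lt_of_le_of_lt hij h
      simp only [g, h, hi, dif_pos]
      exact hσ (show (⟨i, hi⟩ : Fin m) ≤ ⟨j, h⟩ from hij)
    · have : g j = 0 := by simp [g, h]
      rw [this]; exact hg0 i
  have hsum : ∑ i, a i = ∑ i ∈ Finset.range m, g i := by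
    rw [← Equiv.sum_comp σ a, Finset.sum_range]
    refine Finset.sum_congr rfl fun i _ => ?_
    simp [g]
  have hnR : (0 : ℝ) < n := by exact_mod_cast hn
  have hm0 : g m < ((n : ℝ) ^ 2 ^ m)⁻¹ := by
    have : g m = 0 := by simp [g]
    rw [this]; positivity
  have hex : ∃ k, g k < ((n : ℝ) ^ 2 ^ k)⁻¹ := ⟨m, hm0⟩
  classical
  obtain ⟨k, hkm, hk, hlt⟩ : ∃ k, k ≤ m ∧ g k < ((n : ℝ) ^ 2 ^ k)⁻¹ ∧
      ∀ i < k, ((n : ℝ) ^ 2 ^ i)⁻¹ ≤ g i :=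
    ⟨Nat.find hex, Nat.find_min' hex hm0, Nat.find_spec hex,
      fun i hi => not_lt.1 (Nat.find_min hex hi)⟩
  have hb : ∀ i : Fin k, ∃ b : ℕ, 0 < b ∧ g i = 1 / (b : ℝ) := by
    intro i
    rcases hgF i with h | h
    · have h1 := hlt i i.2
      have h2 : (0 : ℝ) < ((n : ℝ) ^ 2 ^ (i : ℕ))⁻¹ := by positivity
      rw [Set.mem_singleton_iff.1 h] at h1
      linarith
    · exact h
  choose b hb0 hbg using hb
  have hbR : ∀ i, (0 : ℝ) < b i := fun i => by exact_mod_cast hb0 i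
  have hxi : xiVal b = ∑ i ∈ Finset.range k, g i := by
    rw [xiVal, Finset.sum_range]
    exact Finset.sum_congr rfl fun i _ => (hbg i).symm
  have hsplit := Finset.sum_range_add_sum_Ico g hkm
  simp only [Set.mem_iUnion]
  refine ⟨k, hkm, b, ⟨fun i => hb0 i, fun i j hij => ?_, fun i => ?_⟩, ?_, ?_⟩
  · have h := hganti (show (i : ℕ) ≤ j from hij)
    rw [hbg, hbg, one_div_le_one_div (hbR j) (hbR i)] at h
    exact_mod_cast h
  · have h := hlt i i.2
    rw [hbg, one_div, inv_le_inv₀ (by positivity) (hbR i)] at h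
    exact_mod_cast h
  · rw [hsum, hxi, ← hsplit]
    have := Finset.sum_nonneg (s := Finset.Ico k m) (fun i _ => hg0 i)
    linarith
  · rw [hsum, hxi, ← hsplit]
    have h1 : ∑ i ∈ Finset.Ico k m, g i ≤ ∑ i ∈ Finset.Ico k m, ((n : ℝ) ^ 2 ^ k)⁻¹ :=
      Finset.sum_le_sum fun i hi => (hganti (Finset.mem_Ico.1 hi).1).trans hk.le
    have h2 : ∑ i ∈ Finset.Ico k m, ((n : ℝ) ^ 2 ^ k)⁻¹ ≤ (m : ℝ) * ((n : ℝ) ^ 2 ^ k)⁻¹ := by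
      rw [Finset.sum_const, Nat.card_Ico, nsmul_eq_mul]
      gcongr
      exact Nat.sub_le m k
    linarith
end

section
/- For every positive integer m and every integer n ≥ 2, the set F_m can be covered by at most m(m+1)·n^{2^m − 1} closed intervals of length n^{−2^m}. -/
open Set

/-- `Ω` can be covered by at most `B` closed intervals of length `r`. -/
def CoveredBy (Ω : Set ℝ) (r B : ℝ) : Prop :=
  ∃ t : Finset ℝ, (t.card : ℝ) ≤ B ∧ Ω ⊆ ⋃ c ∈ t, Set.Icc c (c + r)

theorem Fm_aux (m : ℕ) : ∀ n : ℕ, 1 ≤ n → ∃ t : Finset ℝ,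
    2 * t.card ≤ (2 + m * (m + 1)) * n ^ (2 ^ m - 1) ∧
    FsumSet m ⊆ ⋃ c ∈ t, Set.Icc c (c + ((n : ℝ) ^ 2 ^ m)⁻¹) := by
  induction m with
  | zero =>
    intro n hn
    refine ⟨{0}, by simp, ?_⟩
    rintro x ⟨a, _, rfl⟩
    simp
  | succ m ih =>
    intro n hn
    obtain ⟨t, ht, hcov⟩ := ih (n ^ 2) (Nat.one_le_pow _ _ hn)
    have hn0 : (0 : ℝ) < n := by exact_mod_cast hn
    have hp : 1 ≤ 2 ^ m := Nat.one_le_two_pow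
    have hr : (((n ^ 2 : ℕ) : ℝ) ^ 2 ^ m) = (n : ℝ) ^ 2 ^ (m + 1) := by
      push_cast
      rw [← pow_mul, pow_succ' 2 m]
    rw [hr] at hcov
    set r : ℝ := ((n : ℝ) ^ 2 ^ (m + 1))⁻¹ with hrdef
    have hrpos : 0 < r := by positivity
    set K : ℕ := (m + 1) * n ^ (2 ^ (m + 1) - 1) with hK
    have hKpos : 0 < K := by positivity
    have hKr : (K : ℝ) * r = (m + 1) * (1 / (n : ℝ)) := by
      have h2 : (n : ℝ) ^ 2 ^ (m + 1) = (n : ℝ) ^ (2 ^ (m + 1) - 1) * n := by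
        rw [← pow_succ]
        congr 1
        have : 1 ≤ 2 ^ (m + 1) := Nat.one_le_two_pow
        omega
      rw [hrdef, h2, hK]
      push_cast
      field_simp
    refine ⟨(Finset.range K).image (fun j : ℕ => (j : ℝ) * r) ∪
      (Finset.range n ×ˢ t).image (fun p : ℕ × ℝ => 1 / (p.1 : ℝ) + p.2), ?_, ?_⟩
    · have h1 := Finset.card_union_le ((Finset.range K).image (fun j : ℕ => (j : ℝ) * r))
        ((Finset.range n ×ˢ t).image (fun p : ℕ × ℝ => 1 / (p.1 : ℝ) + p.2))
      have h2 : ((Finset.range K).image (fun j : ℕ => (j : ℝ) * r)).card ≤ K := by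
        simpa using Finset.card_image_le (s := Finset.range K) (f := fun j : ℕ => (j : ℝ) * r)
      have h3 : ((Finset.range n ×ˢ t).image (fun p : ℕ × ℝ => 1 / (p.1 : ℝ) + p.2)).card
          ≤ n * t.card := by
        refine Finset.card_image_le.trans ?_
        simp
      have h4 : n * (n ^ 2) ^ (2 ^ m - 1) = n ^ (2 ^ (m + 1) - 1) := by
        rw [← pow_mul, ← pow_succ']
        congr 1
        rw [pow_succ' 2 m]
        omega
      have h5 : n * (2 * t.card) ≤ (2 + m * (m + 1)) * n ^ (2 ^ (m + 1) - 1) := by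
        rw [← h4]
        calc n * (2 * t.card) ≤ n * ((2 + m * (m + 1)) * (n ^ 2) ^ (2 ^ m - 1)) :=
              Nat.mul_le_mul_left _ ht
          _ = _ := by ring
      have h6 : (2 + (m + 1) * (m + 1 + 1)) * n ^ (2 ^ (m + 1) - 1)
        = 2 * K + (2 + m * (m + 1)) * n ^ (2 ^ (m + 1) - 1) := by
        rw [hK]; ring
      rw [h6]
      linarith
    · rintro x ⟨a, ha, rfl⟩
      by_cases hex : ∃ i, ∃ k : ℕ, k < n ∧ a i = 1 / (k : ℝ)
      · obtain ⟨i, k, hk, hik⟩ := hex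
        have hmem : (∑ j, a (i.succAbove j)) ∈ FsumSet m :=
          ⟨fun j => a (i.succAbove j), fun j => ha _, rfl⟩
        have := hcov hmem
        simp only [Set.mem_iUnion, Set.mem_Icc, exists_prop] at this
        obtain ⟨c, hc, hc1, hc2⟩ := this
        simp only [Set.mem_iUnion, Set.mem_Icc, exists_prop]
        refine ⟨1 / (k : ℝ) + c, ?_, ?_, ?_⟩
        · refine Finset.mem_union_right _ (Finset.mem_image.2 ⟨(k, c), ?_, rfl⟩)
          simp [hk, hc]
        · rw [Fin.sum_univ_succAbove a i, hik]; linarith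
        · rw [Fin.sum_univ_succAbove a i, hik]; linarith
      · push Not at hex
        have hb : ∀ i, 0 ≤ a i ∧ a i ≤ 1 / (n : ℝ) := by
          intro i
          rcases ha i with h | ⟨k, hk, h⟩
          · have h : a i = 0 := h
            rw [h]
            exact ⟨le_rfl, by positivity⟩
          · have hnk : n ≤ k := by
              by_contra hlt
              exact hex i k (by omega) h
            rw [h]
            refine ⟨by positivity, one_div_le_one_div_of_le hn0 (by exact_mod_cast hnk)⟩
        have h0 : 0 ≤ ∑ i, a i := Finset.sum_nonneg fun i _ => (hb i).1
        have h1 : ∑ i, a i ≤ K * r := by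
          rw [hKr]
          calc ∑ i, a i ≤ ∑ _i : Fin (m + 1), 1 / (n : ℝ) :=
                Finset.sum_le_sum fun i _ => (hb i).2
            _ = _ := by simp
        generalize ∑ i, a i = x at h0 h1
        simp only [Set.mem_iUnion, Set.mem_Icc, exists_prop]
        have key : ∃ j < K, (j : ℝ) * r ≤ x ∧ x ≤ j * r + r := by
          rcases h1.lt_or_eq with hlt | heq
          · refine ⟨⌊x / r⌋₊, ?_, ?_, ?_⟩
            · rw [Nat.floor_lt (by positivity), div_lt_iff₀ hrpos]
              exact hlt
            · rw [← le_div_iff₀ hrpos]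
              exact Nat.floor_le (by positivity)
            · have := (Nat.lt_floor_add_one (x / r)).le
              rw [div_le_iff₀ hrpos] at this
              linarith
          · obtain ⟨j, hj⟩ := Nat.exists_eq_succ_of_ne_zero hKpos.ne'
            have hj' : (K : ℝ) = j + 1 := by rw [hj]; push_cast; ring
            rw [hj'] at heq
            exact ⟨j, by omega, by linarith, by linarith⟩
        obtain ⟨j, hj, hj1, hj2⟩ := key
        exact ⟨j * r, Finset.mem_union_left _ (Finset.mem_image.2
          ⟨j, Finset.mem_range.2 hj, rfl⟩), hj1, hj2⟩

/-- For `m ≥ 1` and `n ≥ 2`, the set `F_m` can be covered by at most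
`m(m+1)·n^{2^m - 1}` closed intervals of length `n^{-2^m}`. -/
theorem Fm_covering (m n : ℕ) (hm : 0 < m) (hn : 2 ≤ n) :
    CoveredBy (FsumSet m) (((n : ℝ) ^ 2 ^ m)⁻¹)
      ((m : ℝ) * ((m : ℝ) + 1) * (n : ℝ) ^ (2 ^ m - 1)) := by
  obtain ⟨t, ht, hc⟩ := Fm_aux m n (by omega)
  refine ⟨t, ?_, hc⟩
  have h : t.card ≤ m * (m + 1) * n ^ (2 ^ m - 1) := by
    have h2 : 2 ≤ m * (m + 1) := by nlinarith
    have h3 := Nat.mul_le_mul_right (n ^ (2 ^ m - 1)) h2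
    linarith
  exact_mod_cast h
end

section
/- Let m, n be positive integers. Then for every real number x ∈ (0, 1/n), there exists y ∈ E_m^* such that |x − y| ≤ n^{−(m+1)}. -/
open Set

lemma engel_step_aux (k : ℕ) (hk : 1 ≤ k) (z : ℝ) (hz : 0 ≤ z) (hz1 : z * k < 1) :
    engelStep ((1 + z) / (k + 1)) = z := by
  have hk' : (1 : ℝ) ≤ k := by exact_mod_cast hk
  have hc : ⌈1 / ((1 + z) / ((k : ℝ) + 1))⌉ = (k : ℤ) + 1 := by
    rw [Int.ceil_eq_iff, one_div_div]
    push_cast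
    constructor
    · rw [lt_div_iff₀ (by linarith)]; nlinarith
    · rw [div_le_iff₀ (by linarith)]; nlinarith
  unfold engelStep
  rw [hc]
  push_cast
  field_simp
  ring

lemma engel_len_aux (k : ℕ) (hk : 1 ≤ k) (z : ℝ) (hz : 0 ≤ z) (hz1 : z * k < 1) (m : ℕ)
    (h : engelLength z m) : engelLength ((1 + z) / (k + 1)) (m + 1) := by
  have hs : ∀ i, engelIter ((1 + z) / (k + 1)) (i + 1) = engelIter z i := by
    intro i
    unfold engelIter
    rw [Function.iterate_succ_apply, engel_step_aux k hk z hz hz1]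
  refine ⟨?_, ?_⟩
  · intro i hi
    cases i with
    | zero => simp only [engelIter, Function.iterate_zero, id]; positivity
    | succ i => rw [hs]; exact h.1 i (by omega)
  · rw [hs]; exact h.2

lemma engel_lt_aux (k : ℕ) (hk : 1 ≤ k) (z : ℝ) (hz1 : z * k < 1) :
    ((1 + z) / (k + 1)) * k < 1 := by
  have hk' : (1 : ℝ) ≤ k := by exact_mod_cast hk
  rw [div_mul_eq_mul_div, div_lt_one (by linarith)]
  nlinarith

lemma engel_main (m : ℕ) : ∀ (n : ℕ), 1 ≤ n → ∀ x : ℝ, 0 ≤ x → x * n < 1 →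
    ∃ y : ℝ, (∃ q : ℚ, (q : ℝ) = y) ∧ 0 ≤ y ∧ y * n < 1 ∧ engelLength y m ∧
      |x - y| * (n : ℝ) ^ (m + 1) ≤ 1 := by
  induction m with
  | zero =>
    intro n hn x hx hxn
    refine ⟨0, ⟨0, by simp⟩, le_rfl, by simp, ⟨by simp, by simp [engelIter]⟩, ?_⟩
    simp only [sub_zero, abs_of_nonneg hx, zero_add, pow_one]
    exact hxn.le
  | succ m ih =>
    intro n hn x hx hxn
    have hn' : (1 : ℝ) ≤ n := by exact_mod_cast hn
    rcases hx.eq_or_lt with rfl | hx0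
    · have hk : 1 ≤ n ^ (m + 2) := Nat.one_le_pow _ _ hn
      obtain ⟨z, ⟨q, rfl⟩, hz, hz1, hl, -⟩ := ih (n ^ (m + 2)) hk 0 le_rfl (by simp)
      have hlt := engel_lt_aux _ hk _ hz1
      have hlen := engel_len_aux _ hk _ hz hz1 m hl
      set y : ℝ := (1 + (q : ℝ)) / (((n ^ (m + 2) : ℕ) : ℝ) + 1) with hy
      have hy0 : 0 ≤ y := by positivity
      push_cast at hlt
      refine ⟨y, ⟨(1 + q) / (((n ^ (m + 2) : ℕ) : ℚ) + 1), by rw [hy]; push_cast; rfl⟩,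
        hy0, ?_, hlen, ?_⟩
      · refine lt_of_le_of_lt (mul_le_mul_of_nonneg_left ?_ hy0) hlt
        exact le_self_pow₀ hn' (by omega)
      · rw [zero_sub, abs_neg, abs_of_nonneg hy0]
        exact hlt.le
    · have hnx : (n : ℝ) < 1 / x := by rw [lt_div_iff₀ hx0]; linarith
      have hceil : n < ⌈1 / x⌉₊ := Nat.lt_ceil.2 hnx
      obtain ⟨k, hk⟩ : ∃ k, ⌈1 / x⌉₊ = k + 1 := ⟨⌈1 / x⌉₊ - 1, by omega⟩
      have hnk : n ≤ k := by omega
      have hk1 : 1 ≤ k := by omega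
      have hkx : (k : ℝ) * x < 1 := by
        have : (k : ℝ) < 1 / x := Nat.lt_ceil.1 (by omega)
        rwa [lt_div_iff₀ hx0] at this
      have hkx' : 1 ≤ ((k : ℝ) + 1) * x := by
        have h := Nat.le_ceil (1 / x)
        rw [hk, div_le_iff₀ hx0] at h
        push_cast at h
        exact h
      have hnk' : (n : ℝ) ≤ k := by exact_mod_cast hnk
      obtain ⟨z, ⟨q, rfl⟩, hz, hz1, hl, hd⟩ := ih k hk1 ((k + 1) * x - 1) (by linarith)
        (by nlinarith)
      have hlt := engel_lt_aux _ hk1 _ hz1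
      have hlen := engel_len_aux _ hk1 _ hz hz1 m hl
      have hy0 : 0 ≤ (1 + (q : ℝ)) / ((k : ℝ) + 1) := by positivity
      refine ⟨(1 + (q : ℝ)) / ((k : ℝ) + 1), ⟨(1 + q) / ((k : ℚ) + 1), by push_cast; rfl⟩,
        hy0, ?_, hlen, ?_⟩
      · exact lt_of_le_of_lt (mul_le_mul_of_nonneg_left hnk' hy0) hlt
      · have hk0 : (0 : ℝ) < (k : ℝ) + 1 := by positivity
        have e : ((k : ℝ) + 1) * x - 1 - q = (k + 1) * (x - (1 + (q : ℝ)) / ((k : ℝ) + 1)) := by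
          field_simp
          ring
        rw [e, abs_mul, abs_of_pos hk0] at hd
        refine le_trans ?_ hd
        rw [mul_comm ((k : ℝ) + 1), mul_assoc]
        refine mul_le_mul_of_nonneg_left ?_ (abs_nonneg _)
        rw [pow_succ, mul_comm]
        have : (n : ℝ) ^ (m + 1) ≤ (k : ℝ) ^ (m + 1) := by gcongr
        exact mul_le_mul (by linarith) this (by positivity) hk0.le

/-- For `m, n ≥ 1` and every `x ∈ (0, 1/n)`, there exists `y ∈ E_m^*` with
`|x - y| ≤ n^{-(m+1)}`. -/
theorem engel_density (m n : ℕ) (hm : 0 < m) (hn : 0 < n)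
    (x : ℝ) (hx : x ∈ Set.Ioo (0 : ℝ) (1 / (n : ℝ))) :
    ∃ y ∈ EstarSet m, |x - y| ≤ ((n : ℝ) ^ (m + 1))⁻¹ := by
  have hn' : (1 : ℝ) ≤ n := by exact_mod_cast hn
  have hx2 := hx.2
  rw [lt_div_iff₀ (by linarith)] at hx2
  obtain ⟨y, hq, hy, hy1, hl, hd⟩ := engel_main m n hn x hx.1.le hx2
  refine ⟨y, ⟨hq, ⟨?_, by nlinarith⟩, hl⟩, ?_⟩
  · simpa [engelIter] using hl.1 0 hm
  · rw [← one_div, le_div_iff₀ (by positivity)]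
    exact hd
end
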